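/- arXiv:1806.04566 — 3 statements merged into one kernel-verified Lean document; each statement's English description precedes it below -/
import Mathlib

section
/- Let G be a k-dimensional simplicial complex, j ∈ {1,…,k−1}, and let S be the support of a j-cocycle of G. For a k-simplex K, let S_K denote the set of j-simplices in S contained in K. Then for each k-simplex K of G: (i) either S_K = ∅, or both |S_K| ≥ k−j+1 and the union of the members of S_K equals K; (ii) if |S_K| = k−j+1, then S_K forms a j-flower in K, i.e. the intersection of all members of S_K is a j-element set C and every member of S_K equals C ∪ {w} for some w ∈ K \ C, with the union of the members equal to K. -/
/-!
Let `σ` be a member of `S_K` and `w` a vertex of `K` outside `σ`. The `(j+1)`-simplex `σ ∪ {w}` has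
an even number of faces in `S`, hence one besides `σ`, and this face is `σ` with some vertex
exchanged for `w`. Different `w` give different faces, so `S_K` has at least `k - j` members besides
`σ`, and together they cover `K`. If there are no more than these, then for every member `σ` each
vertex outside `σ` lies in exactly one member. Hence a vertex common to two members lies in all of
them, and the intersection of two members, which has size `j`, is the centre of a flower.
-/

open MeasureTheory Filter

attribute [local instance] Classical.propDecidable

namespace RSC

variable {V : Type*}

/-- `A` is an `i`-dimensional simplex of the complex `G`. -/
def IsSimplex (G : Set (Finset V)) (i : ℕ) (A : Finset V) : Prop :=
  A ∈ G ∧ A.card = i + 1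

/-- A `k`-dimensional simplicial complex on vertex set `V`. -/
structure IsKComplex (G : Set (Finset V)) (k : ℕ) : Prop where
  down : ∀ A ∈ G, ∀ B, B ⊆ A → B.Nonempty → B ∈ G
  singletons : ∀ v : V, ({v} : Finset V) ∈ G
  dim : ∀ A ∈ G, A.card ≤ k + 1

/-- `i`-cochains with `F₂`-coefficients. -/
abbrev Cochain (G : Set (Finset V)) (i : ℕ) : Type _ :=
  {A : Finset V // IsSimplex G i A} → ZMod 2

/-- The coboundary map `δ^i : C^i(G) → C^{i+1}(G)`. -/
noncomputable def coboundary (G : Set (Finset V)) (i : ℕ) :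
    Cochain G i →ₗ[ZMod 2] Cochain G (i + 1) where
  toFun f := fun σ => ∑ τ ∈ Finset.powersetCard (i + 1) (σ : Finset V),
      if h : IsSimplex G i τ then f ⟨τ, h⟩ else 0
  map_add' f g := by
    funext σ
    simp only [Pi.add_apply, ← Finset.sum_add_distrib]
    refine Finset.sum_congr rfl fun τ _ => ?_
    by_cases h : IsSimplex G i τ <;> simp [h]
  map_smul' c f := by
    funext σ
    simp only [Pi.smul_apply, RingHom.id_apply, Finset.smul_sum]
    refine Finset.sum_congr rfl fun τ _ => ?_
    by_cases h : IsSimplex G i τ <;> simp [h]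

/-- The submodule of `i`-cocycles. -/
noncomputable def cocycles (G : Set (Finset V)) (i : ℕ) : Submodule (ZMod 2) (Cochain G i) :=
  LinearMap.ker (coboundary G i)

/-- The submodule of `i`-coboundaries (`δ^{-1}` is the zero map). -/
noncomputable def coboundaries (G : Set (Finset V)) : (i : ℕ) → Submodule (ZMod 2) (Cochain G i)
  | 0 => ⊥
  | (i + 1) => LinearMap.range (coboundary G i)

/-- The `i`-th cohomology group `H^i(G;F₂) = ker δ^i / im δ^{i-1}`. -/
noncomputable abbrev cohomology (G : Set (Finset V)) (i : ℕ) :=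
  (cocycles G i) ⧸ ((coboundaries G i).comap (cocycles G i).subtype)

/-- `F₂`-cohomological `j`-connectedness: `H^0 ≅ F₂` and `H^i = 0` for `1 ≤ i ≤ j`. -/
def CohomConnected (G : Set (Finset V)) (j : ℕ) : Prop :=
  Nonempty (cohomology G 0 ≃ₗ[ZMod 2] ZMod 2) ∧
    ∀ i, 1 ≤ i → i ≤ j → Subsingleton (cohomology G i)

/-- The `j`-flower in `K` with centre `C`: the set of petals `C ∪ {w}`, `w ∈ K \ C`. -/
def Flower [DecidableEq V] (K C : Finset V) : Set (Finset V) :=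
  {P | ∃ w ∈ K \ C, P = insert w C}

/-- A copy of `M_j^-`: a `k`-simplex `K` together with a `(j-1)`-simplex `C ⊆ K` such that
each petal of the flower `F(K,C)` is contained in no `k`-simplex other than `K`. -/
def IsMjMinus [DecidableEq V] (G : Set (Finset V)) (k j : ℕ) (K C : Finset V) : Prop :=
  IsSimplex G k K ∧ C ∈ G ∧ C.card = j ∧ C ⊆ K ∧
    ∀ P ∈ Flower K C, ∀ K', IsSimplex G k K' → P ⊆ K' → K' = K

/-- A `j`-cycle: every `(j-1)`-simplex lies in an even number of members of `J`. -/
def IsCycle (G : Set (Finset V)) (j : ℕ) (J : Finset (Finset V)) : Prop :=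
  (∀ σ ∈ J, IsSimplex G j σ) ∧
    ∀ τ : Finset V, τ.card = j → Even (J.filter (fun σ => τ ⊆ σ)).card

/-- A copy of `M_j`. -/
def IsMj [DecidableEq V] (G : Set (Finset V)) (k j : ℕ) (K C : Finset V)
    (J : Finset (Finset V)) : Prop :=
  IsMjMinus G k j K C ∧ IsCycle G j J ∧ ∃! P : Finset V, P ∈ J ∧ P ∈ Flower K C

/-- A `j`-shell: a `(j+2)`-set all of whose `(j+1)`-subsets are `j`-simplices. -/
def IsShell (G : Set (Finset V)) (j : ℕ) (A : Finset V) : Prop :=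
  A.card = j + 2 ∧ ∀ τ ⊆ A, τ.card = j + 1 → τ ∈ G

/-- A copy of `M_j^*`. -/
def IsMjStar [DecidableEq V] (G : Set (Finset V)) (k j : ℕ) (K C : Finset V) (w a : V) : Prop :=
  IsMjMinus G k j K C ∧ w ∈ K \ C ∧ a ∉ K ∧ IsShell G j (insert a (insert w C))

/-- The support of a cochain. -/
def cochainSupport {G : Set (Finset V)} {i : ℕ} (f : Cochain G i) : Set (Finset V) :=
  {A | ∃ h : IsSimplex G i A, f ⟨A, h⟩ = 1}

/-- A cochain arising from a copy of `M_j^-`: its support is the flower `F(K,C)`. -/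
def ArisesFrom [DecidableEq V] (G : Set (Finset V)) (k j : ℕ) (f : Cochain G j)
    (K C : Finset V) : Prop :=
  IsMjMinus G k j K C ∧ cochainSupport f = Flower K C

/-- A `j`-cocycle generated by copies of `M_j^-`: it differs by a `j`-coboundary from a sum
of `j`-cocycles arising from copies of `M_j^-`. -/
def GeneratedByMjMinus [DecidableEq V] (G : Set (Finset V)) (k j : ℕ) (f : Cochain G j) : Prop :=
  ∃ (m : ℕ) (fs : Fin m → Cochain G j),
    (∀ i, ∃ K C, ArisesFrom G k j (fs i) K C) ∧
      f - (∑ i, fs i) ∈ coboundaries G j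

/-- Membership in `N_G`: a `j`-cocycle not generated by copies of `M_j^-`. -/
def InNG [DecidableEq V] (G : Set (Finset V)) (k j : ℕ) (f : Cochain G j) : Prop :=
  f ∈ cocycles G j ∧ ¬ GeneratedByMjMinus G k j f

/-- Traversability: the transitive closure of "lying in a common `k`-simplex" is `S × S`. -/
def Traversable (G : Set (Finset V)) (k : ℕ) (S : Set (Finset V)) : Prop :=
  ∀ σ₁ ∈ S, ∀ σ₂ ∈ S,
    Relation.TransGen
      (fun a b => a ∈ S ∧ b ∈ S ∧ ∃ K, IsSimplex G k K ∧ a ⊆ K ∧ b ⊆ K) σ₁ σ₂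

/-- A local obstacle: a `k`-simplex containing at least `k-j+1` many `j`-simplices,
each lying in no other `k`-simplex. -/
def IsLocalObstacle (G : Set (Finset V)) (k j : ℕ) (K : Finset V) : Prop :=
  IsSimplex G k K ∧
    k - j + 1 ≤ {σ : Finset V | IsSimplex G j σ ∧ σ ⊆ K ∧
      ∀ K', IsSimplex G k K' → σ ⊆ K' → K' = K}.ncard

/-- The random complex `G_p` given birth times `t`: all singletons together with all
non-empty subsets of `(k+1)`-sets with birth time at most `p`. -/
def complexAt (k n : ℕ) (t : Finset (Fin n) → ℝ) (p : ℝ) : Set (Finset (Fin n)) :=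
  {A | (∃ v, A = {v}) ∨
    (A.Nonempty ∧ ∃ K : Finset (Fin n), K.card = k + 1 ∧ t K ≤ p ∧ A ⊆ K)}

/-- The distribution of birth times: i.i.d. uniform on `[0,1]`. -/
noncomputable def birthMeasure (n : ℕ) : Measure (Finset (Fin n) → ℝ) :=
  Measure.pi fun _ => volume.restrict (Set.Icc (0 : ℝ) 1)

/-- `p_{M_j}`: the supremum of the probabilities `p ∈ [0,1]` at which `G_p` contains
a copy of `M_j`. -/
noncomputable def pMj (k j n : ℕ) (t : Finset (Fin n) → ℝ) : ℝ :=
  sSup {p : ℝ | p ∈ Set.Icc (0 : ℝ) 1 ∧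
    ∃ K C J, IsMj (complexAt k n t p) k j K C J}

/-- The threshold `p_j`. -/
noncomputable def pjThreshold (k j n : ℕ) : ℝ :=
  ((j + 1 : ℝ) * Real.log n + Real.log (Real.log n)) * (Nat.factorial (k - j)) /
    (((k - j + 1 : ℕ) : ℝ) * (n : ℝ) ^ (k - j))

/-- `p_j^-`. -/
noncomputable def pjMinus (k j n : ℕ) : ℝ :=
  (1 - 1 / Real.sqrt (Real.log n)) * ((j + 1 : ℝ) * Real.log n) * (Nat.factorial (k - j)) /
    (((k - j + 1 : ℕ) : ℝ) * (n : ℝ) ^ (k - j))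

/-- `p_{j-1}^-`. -/
noncomputable def pjPrevMinus (k j n : ℕ) : ℝ :=
  (1 - 1 / Real.sqrt (Real.log n)) * ((j : ℝ) * Real.log n) * (Nat.factorial (k - j + 1)) /
    (((k - j + 2 : ℕ) : ℝ) * (n : ℝ) ^ (k - j + 1))

/-- `p_j^{(1)}`. -/
noncomputable def pjOne (k j n : ℕ) : ℝ :=
  1 / (10 * ((j : ℝ) + 1) * (Nat.choose (k + 1) (j + 1)) * (n : ℝ) ^ (k - j))

/-- The number of copies of `M_j^-` in `G`. -/
noncomputable def countMjMinus (k j : ℕ) {n : ℕ} (G : Set (Finset (Fin n))) : ℕ :=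
  {x : Finset (Fin n) × Finset (Fin n) | IsMjMinus G k j x.1 x.2}.ncard

/-- The number of copies of `M_j^*` in `G`. -/
noncomputable def countMjStar (k j : ℕ) {n : ℕ} (G : Set (Finset (Fin n))) : ℕ :=
  {x : Finset (Fin n) × Finset (Fin n) × Fin n × Fin n |
    IsMjStar G k j x.1 x.2.1 x.2.2.1 x.2.2.2}.ncard

section Exchange

open scoped Finset

variable [DecidableEq V]

/-- The exchange property of a family `F` of finite sets with respect to `K`: every vertex `w` of
`K` outside a member `σ` is the only vertex outside `σ` of some other member. If all members have
the same size, this other member is `σ` with one vertex exchanged for `w`. -/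
def HasExchange (F : Finset (Finset V)) (K : Finset V) : Prop :=
  ∀ σ ∈ F, ∀ w ∈ K \ σ, ∃ τ ∈ F, τ \ σ = {w}

variable {F : Finset (Finset V)} {K σ τ ρ : Finset V}

theorem HasExchange.exists_mem (h : HasExchange F K) (hF : F.Nonempty) {v : V} (hv : v ∈ K) :
    ∃ σ ∈ F, v ∈ σ := by
  obtain ⟨σ, hσ⟩ := hF
  by_cases hvσ : v ∈ σ
  · exact ⟨σ, hσ, hvσ⟩
  · obtain ⟨τ, hτ, hτσ⟩ := h σ hσ v (Finset.mem_sdiff.2 ⟨hv, hvσ⟩)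
    exact ⟨τ, hτ, Finset.sdiff_subset (hτσ ▸ Finset.mem_singleton_self v)⟩

theorem HasExchange.exists_injOn (h : HasExchange F K) (hσ : σ ∈ F) :
    ∃ g : V → Finset V, Set.MapsTo g ↑(K \ σ) ↑(F.erase σ) ∧ Set.InjOn g ↑(K \ σ) ∧
      ∀ w ∈ K \ σ, g w \ σ = {w} := by
  choose! g hgF hg using h σ hσ
  refine ⟨g, fun w hw => Finset.mem_erase.2 ⟨fun hgσ => ?_, hgF w hw⟩,
    fun w hw w' hw' hww' => ?_, hg⟩
  · have hempty : g w \ σ = ∅ := by rw [hgσ, Finset.sdiff_self]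
    exact Finset.singleton_ne_empty w ((hg w hw).symm.trans hempty)
  · exact Finset.singleton_injective ((hg w hw).symm.trans (hww' ▸ hg w' hw'))

theorem HasExchange.card_sdiff_lt_card (h : HasExchange F K) (hσ : σ ∈ F) : #(K \ σ) < #F := by
  obtain ⟨g, hgF, hg, -⟩ := h.exists_injOn hσ
  exact (Finset.card_le_card_of_injOn g hgF hg).trans_lt (Finset.card_erase_lt_of_mem hσ)

theorem HasExchange.exists_surjOn (h : HasExchange F K) (hσ : σ ∈ F)
    (hcard : #F ≤ #(K \ σ) + 1) :
    ∃ g : V → Finset V, Set.SurjOn g ↑(K \ σ) ↑(F.erase σ) ∧ ∀ w ∈ K \ σ, g w \ σ = {w} := by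
  obtain ⟨g, hgF, hg, hgσ⟩ := h.exists_injOn hσ
  have hle : #(F.erase σ) ≤ #(K \ σ) := by rw [Finset.card_erase_of_mem hσ]; omega
  exact ⟨g, Finset.surjOn_of_injOn_of_card_le g hgF hg hle, hgσ⟩

theorem HasExchange.card_sdiff_eq_one (h : HasExchange F K) (hσ : σ ∈ F)
    (hcard : #F ≤ #(K \ σ) + 1) (hτ : τ ∈ F) (hτσ : τ ≠ σ) : #(τ \ σ) = 1 := by
  obtain ⟨g, hsurj, hg⟩ := h.exists_surjOn hσ hcard
  obtain ⟨w, hw, rfl⟩ := hsurj (Finset.mem_erase.2 ⟨hτσ, hτ⟩)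
  rw [hg w hw, Finset.card_singleton]

theorem HasExchange.inter_subset (h : HasExchange F K) (hσ : σ ∈ F)
    (hcard : #F ≤ #(K \ σ) + 1) (hτ : τ ∈ F) (hρ : ρ ∈ F) (hτρ : τ ≠ ρ) : τ ∩ ρ ⊆ σ := by
  intro v hv
  obtain ⟨hvτ, hvρ⟩ := Finset.mem_inter.1 hv
  by_contra hvσ
  obtain ⟨g, hsurj, hg⟩ := h.exists_surjOn hσ hcard
  have eq_of_mem : ∀ α ∈ F, v ∈ α → α = g v := by
    intro α hα hvα
    have hασ : α ≠ σ := by rintro rfl; exact hvσ hvα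
    obtain ⟨w, hw, rfl⟩ := hsurj (Finset.mem_erase.2 ⟨hασ, hα⟩)
    have hvw : v ∈ ({w} : Finset V) := hg w hw ▸ Finset.mem_sdiff.2 ⟨hvα, hvσ⟩
    rw [Finset.mem_singleton.1 hvw]
  exact hτρ ((eq_of_mem τ hτ hvτ).trans (eq_of_mem ρ hρ hvρ).symm)

theorem HasExchange.exists_centre (h : HasExchange F K) {j : ℕ}
    (hsized : (F : Set (Finset V)).Sized (j + 1)) (hF : F.Nonempty)
    (hcard : ∀ σ ∈ F, #F ≤ #(K \ σ) + 1) : ∃ C : Finset V, #C = j ∧ ∀ σ ∈ F, C ⊆ σ := by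
  obtain ⟨σ, rfl⟩ | ⟨τ, hτ, ρ, hρ, hτρ⟩ := hF.exists_eq_singleton_or_nontrivial
  · have hσ : #σ = j + 1 := hsized (Finset.mem_coe.2 (Finset.mem_singleton_self σ))
    obtain ⟨C, hCσ, hC⟩ := Finset.exists_subset_card_eq (by omega : j ≤ #σ)
    exact ⟨C, hC, fun α hα => Finset.mem_singleton.1 hα ▸ hCσ⟩
  · have hinter : #(τ ∩ ρ) + #(τ \ ρ) = j + 1 :=
      (Finset.card_inter_add_card_sdiff τ ρ).trans (hsized hτ)
    rw [h.card_sdiff_eq_one hρ (hcard ρ hρ) hτ hτρ] at hinter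
    exact ⟨τ ∩ ρ, by omega, fun σ hσ => h.inter_subset hσ (hcard σ hσ) hτ hρ hτρ⟩

theorem coe_image_insert_sdiff (K C : Finset V) :
    ((K \ C).image (insert · C) : Set (Finset V)) = Flower K C := by
  ext P
  simp only [Finset.coe_image, Set.mem_image, Finset.mem_coe, Flower, Set.mem_ofPred_eq,
    eq_comm (a := P)]

theorem subset_flower {C : Finset V} {F : Set (Finset V)} (hFK : ∀ σ ∈ F, σ ⊆ K)
    (hsized : F.Sized (#C + 1)) (hC : ∀ σ ∈ F, C ⊆ σ) : F ⊆ Flower K C := by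
  intro σ hσ
  obtain ⟨w, hw, rfl⟩ := Finset.exists_eq_insert_iff.2 ⟨hC σ hσ, (hsized hσ).symm⟩
  exact ⟨w, Finset.mem_sdiff.2 ⟨hFK _ hσ (Finset.mem_insert_self w C), hw⟩, rfl⟩

theorem HasExchange.exists_eq_flower (h : HasExchange F K) {j : ℕ} (hFK : ∀ σ ∈ F, σ ⊆ K)
    (hsized : (F : Set (Finset V)).Sized (j + 1)) (hF : F.Nonempty) (hcard : #F + j ≤ #K) :
    ∃ C : Finset V, #C = j ∧ C ⊆ K ∧ (F : Set (Finset V)) = Flower K C := by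
  have card_sdiff_add : ∀ σ ∈ F, #(K \ σ) + (j + 1) = #K := fun σ hσ =>
    hsized hσ ▸ Finset.card_sdiff_add_card_eq_card (hFK σ hσ)
  obtain ⟨C, rfl, hC⟩ := h.exists_centre hsized hF fun σ hσ => by
    have := card_sdiff_add σ hσ
    omega
  obtain ⟨σ, hσ⟩ := hF
  have hCK : C ⊆ K := (hC σ hσ).trans (hFK σ hσ)
  have hsub : F ⊆ (K \ C).image (insert · C) := by
    rw [← Finset.coe_subset, coe_image_insert_sdiff]
    exact subset_flower hFK hsized hC
  have hle : #((K \ C).image (insert · C)) ≤ #F := by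
    have hpetals := Finset.card_image_le (s := K \ C) (f := (insert · C))
    have hKC := Finset.card_sdiff_add_card_eq_card hCK
    have hKσ := card_sdiff_add σ hσ
    have hlt := h.card_sdiff_lt_card hσ
    omega
  exact ⟨C, rfl, hCK, by
    rw [Finset.eq_of_subset_of_card_le hsub hle, coe_image_insert_sdiff]⟩

end Exchange

section Cocycle

open scoped Finset

variable {G : Set (Finset V)} {j : ℕ} {f : Cochain G j}

theorem dite_eq_ite_mem_cochainSupport (f : Cochain G j) (τ : Finset V) :
    (if h : IsSimplex G j τ then f ⟨τ, h⟩ else 0) = if τ ∈ cochainSupport f then 1 else 0 := by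
  by_cases h : IsSimplex G j τ
  · by_cases hf : f ⟨τ, h⟩ = 0
    · simp [cochainSupport, h, hf]
    · have hf_one : f ⟨τ, h⟩ = 1 := Fin.eq_one_of_ne_zero _ hf
      simp [cochainSupport, h, hf_one]
  · simp [cochainSupport, h]

theorem even_card_filter_mem_cochainSupport (hf : f ∈ cocycles G j) {A : Finset V}
    (hA : IsSimplex G (j + 1) A) :
    Even #{τ ∈ A.powersetCard (j + 1) | τ ∈ cochainSupport f} := by
  rw [← ZMod.natCast_eq_zero_iff_even, ← Finset.sum_boole]
  calc ∑ τ ∈ A.powersetCard (j + 1), (if τ ∈ cochainSupport f then 1 else 0 : ZMod 2)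
      = coboundary G j f ⟨A, hA⟩ :=
        Finset.sum_congr rfl fun τ _ => (dite_eq_ite_mem_cochainSupport f τ).symm
    _ = 0 := congrFun (LinearMap.mem_ker.1 hf) ⟨A, hA⟩

variable [DecidableEq V]

theorem exists_mem_cochainSupport_sdiff_eq_singleton (hf : f ∈ cocycles G j) {σ : Finset V}
    (hσ : σ ∈ cochainSupport f) {w : V} (hA : IsSimplex G (j + 1) (insert w σ)) :
    ∃ τ ∈ cochainSupport f, τ ⊆ insert w σ ∧ τ \ σ = {w} := by
  have hσcard : #σ = j + 1 := hσ.1.2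
  have hσ_mem : σ ∈ {τ ∈ (insert w σ).powersetCard (j + 1) | τ ∈ cochainSupport f} :=
    Finset.mem_filter.2 ⟨Finset.mem_powersetCard.2 ⟨Finset.subset_insert w σ, hσcard⟩, hσ⟩
  have htwo := (even_card_filter_mem_cochainSupport hf hA).two_dvd
  obtain ⟨τ, hτ, hτσ⟩ := Finset.exists_mem_ne
    (Nat.le_of_dvd (Finset.card_pos.2 ⟨σ, hσ_mem⟩) htwo) σ
  obtain ⟨hτA, hτf⟩ := Finset.mem_filter.1 hτ
  obtain ⟨hτw, hτcard⟩ := Finset.mem_powersetCard.1 hτA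
  refine ⟨τ, hτf, hτw, (Finset.subset_singleton_iff.1 ?_).resolve_left fun hempty => ?_⟩
  · grind
  · exact hτσ (Finset.eq_of_subset_of_card_le (Finset.sdiff_eq_empty_iff_subset.1 hempty)
      (hσcard.trans hτcard.symm).le)

theorem hasExchange_cochainSupport (hG : ∀ A ∈ G, ∀ B, B ⊆ A → B.Nonempty → B ∈ G)
    (hf : f ∈ cocycles G j) {K : Finset V} (hK : K ∈ G) :
    HasExchange {σ ∈ K.powerset | σ ∈ cochainSupport f} K := by
  intro σ hσ w hw
  obtain ⟨hσK, hσf⟩ := Finset.mem_filter.1 hσ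
  obtain ⟨hwK, hwσ⟩ := Finset.mem_sdiff.1 hw
  have hsub : insert w σ ⊆ K := Finset.insert_subset hwK (Finset.mem_powerset.1 hσK)
  have hA : IsSimplex G (j + 1) (insert w σ) :=
    ⟨hG K hK _ hsub (Finset.insert_nonempty w σ), by
      rw [Finset.card_insert_of_notMem hwσ, hσf.1.2]⟩
  obtain ⟨τ, hτf, hτA, hτσ⟩ := exists_mem_cochainSupport_sdiff_eq_singleton hf hσf hA
  exact ⟨τ, Finset.mem_filter.2 ⟨Finset.mem_powerset.2 (hτA.trans hsub), hτf⟩, hτσ⟩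

end Cocycle

theorem statement7_general {V : Type*} [DecidableEq V] {k j : ℕ} (hjk : j ≤ k)
    {G : Set (Finset V)} (hG : ∀ A ∈ G, ∀ B, B ⊆ A → B.Nonempty → B ∈ G)
    {f : Cochain G j} (hf : f ∈ cocycles G j) {K : Finset V} (hK : IsSimplex G k K) :
    ({σ ∈ cochainSupport f | σ ⊆ K} = (∅ : Set (Finset V)) ∨
      (k - j + 1 ≤ {σ ∈ cochainSupport f | σ ⊆ K}.ncard ∧
        ∀ v : V, v ∈ K ↔ ∃ σ ∈ cochainSupport f, σ ⊆ K ∧ v ∈ σ)) ∧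
    ({σ ∈ cochainSupport f | σ ⊆ K}.ncard = k - j + 1 →
      ∃ C : Finset V, C.card = j ∧ C ⊆ K ∧ {σ ∈ cochainSupport f | σ ⊆ K} = Flower K C) := by
  obtain ⟨hKG, hKcard⟩ := hK
  have hex := hasExchange_cochainSupport hG hf hKG
  set F : Finset (Finset V) := {σ ∈ K.powerset | σ ∈ cochainSupport f} with hF
  have mem_F {σ} : σ ∈ F ↔ σ ∈ cochainSupport f ∧ σ ⊆ K := by
    rw [hF, Finset.mem_filter, Finset.mem_powerset, and_comm]
  have coe_F : {σ ∈ cochainSupport f | σ ⊆ K} = (F : Set (Finset V)) :=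
    Set.ext fun σ => mem_F.symm
  have hsized : (F : Set (Finset V)).Sized (j + 1) := fun σ hσ => (mem_F.1 hσ).1.1.2
  rw [coe_F, Set.ncard_coe_finset, Finset.coe_eq_empty]
  refine ⟨F.eq_empty_or_nonempty.imp_right fun hne => ⟨?_, fun v => ⟨fun hv => ?_, ?_⟩⟩,
    fun hcard => hex.exists_eq_flower (fun σ hσ => (mem_F.1 hσ).2) hsized
      (Finset.card_pos.1 (by omega)) (by omega)⟩
  · obtain ⟨σ, hσ⟩ := hne
    have hKσ := Finset.card_sdiff_add_card_eq_card (mem_F.1 hσ).2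
    have hlt := hex.card_sdiff_lt_card hσ
    have hσcard := hsized hσ
    omega
  · obtain ⟨σ, hσ, hvσ⟩ := hex.exists_mem hne hv
    exact ⟨σ, (mem_F.1 hσ).1, (mem_F.1 hσ).2, hvσ⟩
  · rintro ⟨σ, -, hσK, hvσ⟩
    exact hσK hvσ

/-- Lemma 3.1: if `S` is the support of a `j`-cocycle of a `k`-complex `G` and `K` is a
`k`-simplex, then (i) either `S_K = ∅`, or `|S_K| ≥ k-j+1` and the union of the members
of `S_K` equals `K`; (ii) if `|S_K| = k-j+1`, then `S_K` forms a `j`-flower in `K`. -/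
theorem statement7 {V : Type*} [DecidableEq V] (k j : ℕ) (hk : 2 ≤ k) (hj : 1 ≤ j)
    (hjk : j < k) (G : Set (Finset V)) (hG : IsKComplex G k)
    (S : Set (Finset V))
    (hS : ∃ f : Cochain G j, f ∈ cocycles G j ∧ cochainSupport f = S)
    (K : Finset V) (hK : IsSimplex G k K) :
    ({σ ∈ S | σ ⊆ K} = (∅ : Set (Finset V)) ∨
      (k - j + 1 ≤ {σ ∈ S | σ ⊆ K}.ncard ∧
        ∀ v : V, v ∈ K ↔ ∃ σ ∈ S, σ ⊆ K ∧ v ∈ σ)) ∧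
    ({σ ∈ S | σ ⊆ K}.ncard = k - j + 1 →
      ∃ C : Finset V, C.card = j ∧ C ⊆ K ∧ {σ ∈ S | σ ⊆ K} = Flower K C) := by
  obtain ⟨f, hf, rfl⟩ := hS
  exact statement7_general hjk.le hG.down hf hK

end RSC
end

section
/- Let k ≥ 2 and j ∈ {1,…,k−1}, and set p = p(n) = p_{j−1}^−. Let X_* be the number of copies of M_j^* in G_p. Then E[X_*] = Θ((log n)^{j+2}) (there exist constants 0 < c_1 ≤ c_2 such that c_1·(log n)^{j+2} ≤ E[X_*] ≤ c_2·(log n)^{j+2} for all sufficiently large n), and for every ε > 0, Pr(|X_* − E[X_*]| ≤ ε·E[X_*]) → 1 as n → ∞. -/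
open MeasureTheory Filter

attribute [local instance] Classical.propDecidable

namespace RSC

variable {V : Type*}

/-- The expected number of copies of `M_j^*` in `G_p` at `p = p_{j-1}^-`. -/
noncomputable def expectStar (k j n : ℕ) : ℝ :=
  ∫ t, (countMjStar k j (complexAt k n t (pjPrevMinus k j n)) : ℝ) ∂(birthMeasure n)

/-!
A copy of `M_j^*` is carried by a `j`-shell `A` with marked vertices `w`, `a` and a simplex covering
each facet of `A`. The flower at `A \ {w, a}` forces every covering simplex to miss the opposite
vertex, so the `j + 2` covering simplices are distinct. There are `Θ(n ^ ((k - j + 1) * (j + 2)))`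
such configurations, each present with probability `p ^ (j + 2)`, and at `p = p_{j-1}^-` the product
`p * n ^ (k - j + 1)` is of order `log n`.

A configuration that is present yields a copy, and distinct ones distinct copies, unless one of at
most `k + 3` faces lies in a further simplex, which has conditional probability
`O(p * n ^ (k - j)) = o(1)`. If a configuration shares a covering simplex with a given one, then a
facet of its shell lies in the bounded vertex set of the given one. Either its whole shell does, or
its last vertex is new, which costs a factor `n` and a further simplex not yet present. So the
expected number of configurations overlapping a given one, conditionally on its presence, is
`O(1 + p * n ^ (k - j + 1))`. The variance is therefore of smaller order than the squared mean, and
Chebyshev's inequality gives concentration.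
-/

open ProbabilityTheory Asymptotics
open scoped Finset

/-! ### Finite sets and products -/

theorem sum_piFinset_ite_prod {ι κ R : Type*} [Fintype ι] [DecidableEq ι] [CommSemiring R]
    (s : Finset ι) (t : ι → Finset κ) (d : κ) (f : ι → κ → R) :
    ∑ g ∈ Fintype.piFinset (fun i => if i ∈ s then t i else {d}), ∏ i ∈ s, f i (g i) =
      ∏ i ∈ s, ∑ x ∈ t i, f i x := by
  have h := Finset.prod_univ_sum (fun i => if i ∈ s then t i else {d})
    fun i x => if i ∈ s then f i x else 1
  simp only [Finset.prod_ite_mem, Finset.univ_inter] at h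
  rw [← h, ← Finset.prod_subset s.subset_univ]
  · exact Finset.prod_congr rfl fun i hi => by simp [hi]
  · intro i _ hi
    simp [hi]

theorem card_piFinset_ite {ι κ : Type*} [Fintype ι] [DecidableEq ι]
    (s : Finset ι) (t : ι → Finset κ) (d : κ) :
    #(Fintype.piFinset fun i => if i ∈ s then t i else {d}) = ∏ i ∈ s, #(t i) := by
  simpa using sum_piFinset_ite_prod (R := ℕ) s t d fun _ _ => 1

theorem card_filter_card_eq_superset_le [Fintype V] [DecidableEq V] (m : ℕ) (σ : Finset V) :
    #{e : Finset V | #e = m ∧ σ ⊆ e} ≤ Fintype.card V ^ (m - #σ) := by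
  calc #{e : Finset V | #e = m ∧ σ ⊆ e}
      ≤ #(Finset.powersetCard (m - #σ) (Finset.univ : Finset V)) := by
        refine Finset.card_le_card_of_injOn (· \ σ) (fun e he => ?_) fun e he e' he' heq => ?_
        · obtain ⟨hcard, hsub⟩ := (Finset.mem_filter.1 he).2
          exact Finset.mem_powersetCard.2
            ⟨Finset.subset_univ _, by rw [Finset.card_sdiff_of_subset hsub, hcard]⟩
        · rw [← Finset.sdiff_union_of_subset (Finset.mem_filter.1 he).2.2,
            ← Finset.sdiff_union_of_subset (Finset.mem_filter.1 he').2.2]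
          exact congrArg (· ∪ σ) heq
    _ = (Fintype.card V).choose (m - #σ) := by rw [Finset.card_powersetCard, Finset.card_univ]
    _ ≤ Fintype.card V ^ (m - #σ) := Nat.choose_le_pow _ _

theorem exists_pairwiseDisjoint_card_eq_div (V : Type*) [Fintype V] (m : ℕ) :
    ∃ P : Fin m → Finset V,
      (∀ i, #(P i) = Fintype.card V / m) ∧ Pairwise (Function.onFun Disjoint P) := by
  obtain ⟨φ⟩ : Nonempty (Fin m × Fin (Fintype.card V / m) ↪ V) :=
    Function.Embedding.nonempty_of_card_le (by simpa using Nat.mul_div_le (Fintype.card V) m)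
  refine ⟨fun i => Finset.univ.map ((Function.Embedding.sectR i _).trans φ), by simp, ?_⟩
  intro i i' hne
  simp [Function.onFun, Finset.disjoint_left, hne.symm]

theorem card_offDiag_le {α : Type*} (s : Finset α) : #s.offDiag ≤ #s ^ 2 := by
  rw [Finset.offDiag_card, sq]
  exact Nat.sub_le _ _

/-! ### Bernoulli random sets -/

theorem map_uniform_and_le (a : Prop) (p : unitInterval) :
    (volume.restrict (Set.Icc (0 : ℝ) 1)).map (fun x : ℝ => a ∧ x ≤ p) =
      unitInterval.toNNReal p • Measure.dirac a +
        unitInterval.toNNReal (unitInterval.symm p) • Measure.dirac False := by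
  have hmeas : Measurable fun x : ℝ => a ∧ x ≤ p :=
    measurable_const.and (measurableSet_setOfPred.1 measurableSet_Iic)
  have hle : (volume.restrict (Set.Icc (0 : ℝ) 1)) {x | x ≤ p} = unitInterval.toNNReal p := by
    have : {x : ℝ | x ≤ p} ∩ Set.Icc 0 1 = Set.Icc 0 (p : ℝ) := by
      ext x
      have := p.2.2
      simp only [Set.mem_inter_iff, Set.mem_ofPred_eq, Set.mem_Icc]
      grind
    rw [Measure.restrict_apply (by exact measurableSet_Iic), this, Real.volume_Icc, sub_zero,
      ENNReal.ofReal_eq_coe_nnreal p.2.1]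
    rfl
  have hlt : (volume.restrict (Set.Icc (0 : ℝ) 1)) {x | p < x} =
      unitInterval.toNNReal (unitInterval.symm p) := by
    have : {x : ℝ | p < x} ∩ Set.Icc 0 1 = Set.Ioc (p : ℝ) 1 := by
      ext x
      have := p.2.1
      simp only [Set.mem_inter_iff, Set.mem_ofPred_eq, Set.mem_Icc, Set.mem_Ioc]
      grind
    rw [Measure.restrict_apply (by exact measurableSet_Ioi), this, Real.volume_Ioc,
      ← unitInterval.coe_symm_eq, ENNReal.ofReal_eq_coe_nnreal (unitInterval.symm p).2.1]
    rfl
  refine Measure.ext_of_singleton fun b => ?_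
  rw [Measure.map_apply hmeas (measurableSet_singleton b)]
  by_cases ha : a <;> by_cases hb : b
  · simp [ha, hb, hle]
  · simp [ha, hb, hlt]
  · simp [ha, hb]
  · simp [ha, hb, ← ENNReal.coe_add]

theorem isSetBernoulli_setOf_le_of_uniform {E : Type*} [Fintype E] (u : Set E)
    (p : unitInterval) :
    IsSetBernoulli (fun t : E → ℝ => {e | e ∈ u ∧ t e ≤ p}) u p
      (Measure.pi fun _ => volume.restrict (Set.Icc (0 : ℝ) 1)) := by
  have hmeas (e : E) : Measurable fun x : ℝ => e ∈ u ∧ x ≤ p :=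
    measurable_const.and (measurableSet_setOfPred.1 measurableSet_Iic)
  have hpi : Measurable fun (t : E → ℝ) e => e ∈ u ∧ t e ≤ p :=
    measurable_pi_lambda _ fun e => (hmeas e).comp (measurable_pi_apply e)
  refine ⟨(MeasurableEquiv.setOfPred.measurable.comp hpi).aemeasurable, ?_⟩
  rw [setBernoulli_eq_map, Measure.infinitePi_eq_pi]
  simp_rw [← map_uniform_and_le]
  have (e : E) : SigmaFinite
      ((volume.restrict (Set.Icc (0 : ℝ) 1)).map fun x : ℝ => e ∈ u ∧ x ≤ p) := inferInstance
  rw [← Measure.pi_map_pi fun e => (hmeas e).aemeasurable]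
  exact (Measure.map_map MeasurableEquiv.setOfPred.measurable hpi).symm

theorem integral_card_filter {Ω ι : Type*} [MeasurableSpace Ω] (μ : Measure Ω)
    [IsFiniteMeasure μ] (I : Finset ι) (P : ι → Ω → Prop) [∀ ω, DecidablePred (P · ω)]
    (hP : ∀ x ∈ I, MeasurableSet {ω | P x ω}) :
    ∫ ω, (#{x ∈ I | P x ω} : ℝ) ∂μ = ∑ x ∈ I, μ.real {ω | P x ω} := by
  have hcard (ω : Ω) :
      (#{x ∈ I | P x ω} : ℝ) = ∑ x ∈ I, {ω | P x ω}.indicator (fun _ => (1 : ℝ)) ω := by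
    simp [Set.indicator_apply]
  simp_rw [hcard]
  rw [integral_finsetSum _ fun x hx => (integrable_const 1).indicator (hP x hx)]
  exact Finset.sum_congr rfl fun x hx => integral_indicator_one (hP x hx)

section SetBernoulli

variable {E ι : Type*} {u : Set E}

theorem setBernoulli_real_superset (p : unitInterval) {T : Finset E} (hT : (T : Set E) ⊆ u) :
    (setBernoulli u p).real {ω | (T : Set E) ⊆ ω} = (p : ℝ) ^ #T := by
  have hpi : (fun q : E → Prop => {e | q e}) ⁻¹' {ω : Set E | (T : Set E) ⊆ ω} =
      Set.pi T fun _ => {True} := by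
    ext q; simp [Set.subset_def, Set.mem_pi]
  have hmeas : setBernoulli u p {ω | (T : Set E) ⊆ ω} =
      (unitInterval.toNNReal p : ENNReal) ^ #T := by
    rw [setBernoulli_apply', hpi, Measure.infinitePi_pi _ fun _ _ => .of_discrete]
    refine Finset.prod_eq_pow_card fun e he => ?_
    simp [hT he]
  simp [measureReal_def, hmeas]

theorem le_setBernoulli_real_superset_disjoint (p : unitInterval) {S B : Finset E}
    (hS : (S : Set E) ⊆ u) (hB : (B : Set E) ⊆ u) (hSB : Disjoint S B) :
    (p : ℝ) ^ #S * (1 - #B * p) ≤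
      (setBernoulli u p).real {ω | (S : Set E) ⊆ ω ∧ Disjoint (B : Set E) ω} := by
  have hcover : {ω : Set E | (S : Set E) ⊆ ω} ⊆
      {ω | (S : Set E) ⊆ ω ∧ Disjoint (B : Set E) ω} ∪
        ⋃ e ∈ B, {ω | ((insert e S : Finset E) : Set E) ⊆ ω} := by
    intro ω hω
    by_cases h : Disjoint (B : Set E) ω
    · exact .inl ⟨hω, h⟩
    · obtain ⟨e, he, heω⟩ := Set.not_disjoint_iff.1 h
      refine .inr (Set.mem_biUnion he ?_)
      simpa [Set.insert_subset_iff] using ⟨heω, hω⟩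
  have hinsert (e : E) (he : e ∈ B) :
      (setBernoulli u p).real {ω | ((insert e S : Finset E) : Set E) ⊆ ω} = (p : ℝ) ^ (#S + 1) := by
    rw [setBernoulli_real_superset p (by simpa [Set.insert_subset_iff] using ⟨hB he, hS⟩),
      Finset.card_insert_of_notMem (Finset.disjoint_right.1 hSB he)]
  have hunion : (p : ℝ) ^ #S ≤
      (setBernoulli u p).real {ω | (S : Set E) ⊆ ω ∧ Disjoint (B : Set E) ω} +
        ∑ e ∈ B, (setBernoulli u p).real {ω | ((insert e S : Finset E) : Set E) ⊆ ω} := by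
    rw [← setBernoulli_real_superset p hS]
    exact (measureReal_mono hcover).trans ((measureReal_union_le _ _).trans
      (add_le_add_right (measureReal_biUnion_finset_le _ _) _))
  rw [Finset.sum_congr rfl hinsert, Finset.sum_const, nsmul_eq_mul, pow_succ] at hunion
  linarith

variable [Finite E]

theorem integral_card_filter_subset_setBernoulli (p : unitInterval) {I : Finset ι}
    {S : ι → Finset E} (hS : ∀ x ∈ I, (S x : Set E) ⊆ u) :
    ∫ ω, (#{x ∈ I | (S x : Set E) ⊆ ω} : ℝ) ∂setBernoulli u p = ∑ x ∈ I, (p : ℝ) ^ #(S x) :=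
  (integral_card_filter _ I _ fun _ _ => .of_discrete).trans
    (Finset.sum_congr rfl fun x hx => setBernoulli_real_superset p (hS x hx))

theorem integral_card_filter_subset_sq_setBernoulli [DecidableEq E] (p : unitInterval)
    {I : Finset ι} {S : ι → Finset E} (hS : ∀ x ∈ I, (S x : Set E) ⊆ u) :
    ∫ ω, (#{x ∈ I | (S x : Set E) ⊆ ω} : ℝ) ^ 2 ∂setBernoulli u p =
      ∑ x ∈ I, ∑ y ∈ I, (p : ℝ) ^ #(S x ∪ S y) := by
  have hsq (ω : Set E) : (#{x ∈ I | (S x : Set E) ⊆ ω} : ℝ) ^ 2 =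
      #{z ∈ I ×ˢ I | ((S z.1 ∪ S z.2 : Finset E) : Set E) ⊆ ω} := by
    simp only [Finset.coe_union, Set.union_subset_iff]
    rw [sq, ← Nat.cast_mul, ← Finset.card_product, ← Finset.filter_product]
  simp_rw [hsq]
  rw [integral_card_filter_subset_setBernoulli, Finset.sum_product]
  simpa using fun x y hx hy => ⟨hS x hx, hS y hy⟩

theorem le_integral_card_filter_subset_disjoint_setBernoulli (p : unitInterval) {I : Finset ι}
    {S B : ι → Finset E} (hS : ∀ x ∈ I, (S x : Set E) ⊆ u) (hB : ∀ x ∈ I, (B x : Set E) ⊆ u)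
    (hSB : ∀ x ∈ I, Disjoint (S x) (B x)) :
    ∑ x ∈ I, (p : ℝ) ^ #(S x) * (1 - #(B x) * p) ≤
      ∫ ω, (#{x ∈ I | (S x : Set E) ⊆ ω ∧ Disjoint (B x : Set E) ω} : ℝ) ∂setBernoulli u p :=
  (Finset.sum_le_sum fun x hx =>
    le_setBernoulli_real_superset_disjoint p (hS x hx) (hB x hx) (hSB x hx)).trans_eq
      (integral_card_filter _ I _ fun _ _ => .of_discrete).symm

end SetBernoulli

theorem sum_sum_pow_card_union_le {E ι : Type*} [DecidableEq E] {p : ℝ} (hp : 0 ≤ p)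
    {I : Finset ι} {S : ι → Finset E} {s : ℕ} (hs : ∀ x ∈ I, #(S x) = s) {M : ℝ}
    (hM : ∀ x ∈ I, ∑ y ∈ I with ¬Disjoint (S y) (S x), p ^ #(S y \ S x) ≤ M) :
    ∑ x ∈ I, ∑ y ∈ I, p ^ #(S x ∪ S y) ≤ (#I * p ^ s) ^ 2 + #I * p ^ s * M := by
  have hrow (x : ι) (hx : x ∈ I) : ∑ y ∈ I, p ^ #(S x ∪ S y) ≤ p ^ s * (#I * p ^ s + M) := by
    have hfactor (y : ι) : p ^ #(S x ∪ S y) = p ^ s * p ^ #(S y \ S x) := by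
      rw [← Finset.union_sdiff_self_eq_union, Finset.card_union_of_disjoint Finset.disjoint_sdiff,
        hs x hx, pow_add]
    have hdisj : ∑ y ∈ I with Disjoint (S y) (S x), p ^ #(S y \ S x) ≤ #I * p ^ s := by
      calc ∑ y ∈ I with Disjoint (S y) (S x), p ^ #(S y \ S x)
          = ∑ y ∈ I with Disjoint (S y) (S x), p ^ s := by
            refine Finset.sum_congr rfl fun y hy => ?_
            rw [Finset.mem_filter] at hy
            rw [Finset.sdiff_eq_self_of_disjoint hy.2, hs y hy.1]
        _ ≤ #I * p ^ s := by
            rw [Finset.sum_const, nsmul_eq_mul]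
            gcongr
            exact Finset.filter_subset _ _
    simp_rw [hfactor]
    rw [← Finset.mul_sum, ← Finset.sum_filter_add_sum_filter_not I fun y => Disjoint (S y) (S x)]
    gcongr
    exact hM x hx
  calc ∑ x ∈ I, ∑ y ∈ I, p ^ #(S x ∪ S y)
      ≤ ∑ _x ∈ I, p ^ s * (#I * p ^ s + M) := Finset.sum_le_sum hrow
    _ = (#I * p ^ s) ^ 2 + #I * p ^ s * M := by rw [Finset.sum_const, nsmul_eq_mul]; ring

/-! ### Copies of `M_j^*` and configurations -/

/-- The downward-closure of the hypergraph `H`, together with all singletons. -/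
def generatedComplex (H : Set (Finset V)) : Set (Finset V) :=
  {A | (∃ v, A = {v}) ∨ A.Nonempty ∧ ∃ K ∈ H, A ⊆ K}

theorem mem_generatedComplex_of_subset {H : Set (Finset V)} {A K : Finset V} (hK : K ∈ H)
    (hAK : A ⊆ K) (hA : A.Nonempty) : A ∈ generatedComplex H :=
  .inr ⟨hA, K, hK, hAK⟩

theorem exists_superset_of_mem_generatedComplex {H : Set (Finset V)} {A : Finset V}
    (hA : A ∈ generatedComplex H) (hcard : 2 ≤ #A) : ∃ K ∈ H, A ⊆ K := by
  rcases hA with ⟨v, rfl⟩ | ⟨-, hK⟩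
  · simp at hcard
  · exact hK

theorem isSimplex_generatedComplex_iff {k : ℕ} (hk : 1 ≤ k) {H : Set (Finset V)}
    (hH : ∀ e ∈ H, #e = k + 1) {K : Finset V} :
    IsSimplex (generatedComplex H) k K ↔ K ∈ H := by
  refine ⟨fun ⟨hK, hcard⟩ => ?_, fun hK =>
    ⟨mem_generatedComplex_of_subset hK subset_rfl (Finset.card_pos.1 (by rw [hH K hK]; lia)),
      hH K hK⟩⟩
  obtain ⟨K', hK', hsub⟩ := exists_superset_of_mem_generatedComplex hK (by lia)
  rwa [Finset.eq_of_subset_of_card_le hsub (by rw [hcard, hH K' hK'])]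

section Configurations

variable [Fintype V] [DecidableEq V] {k j : ℕ} {A : Finset V} {w a : V} {g : V → Finset V}
  {H : Set (Finset V)}

/-- The `(k+1)`-sets meeting `A` exactly in its facet opposite to `u`. -/
def facetCovers (k : ℕ) (A : Finset V) (u : V) : Finset (Finset V) :=
  {e | #e = k + 1 ∧ A.erase u ⊆ e ∧ u ∉ e}

/-- The ways of covering each facet of `A` by its own `(k+1)`-set. The facet opposite to `u ∈ A` is
covered by `g u`; outside `A` the function `g` takes the dummy value `∅`. -/
def coverings (k : ℕ) (A : Finset V) : Finset (V → Finset V) :=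
  Fintype.piFinset fun u => if u ∈ A then facetCovers k A u else {∅}

theorem mem_facetCovers {u : V} {e : Finset V} :
    e ∈ facetCovers k A u ↔ #e = k + 1 ∧ A.erase u ⊆ e ∧ u ∉ e := by
  simp [facetCovers]

theorem mem_coverings :
    g ∈ coverings k A ↔ (∀ u ∈ A, g u ∈ facetCovers k A u) ∧ ∀ u ∉ A, g u = ∅ := by
  simp only [coverings, Fintype.mem_piFinset]
  refine ⟨fun h => ⟨fun u hu => by simpa [hu] using h u, fun u hu => by simpa [hu] using h u⟩,
    fun ⟨hA, hd⟩ u => ?_⟩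
  by_cases hu : u ∈ A
  · simpa [hu] using hA u hu
  · simpa [hu] using hd u hu

theorem eq_of_mem_facetCovers {u v : V} (hu : u ∈ A) {e : Finset V}
    (heu : e ∈ facetCovers k A u) (hev : e ∈ facetCovers k A v) : u = v := by
  by_contra hne
  exact (mem_facetCovers.1 heu).2.2
    ((mem_facetCovers.1 hev).2.1 (Finset.mem_erase.2 ⟨hne, hu⟩))

theorem injOn_of_mem_coverings (hg : g ∈ coverings k A) : Set.InjOn g A := fun u hu v hv huv =>
  eq_of_mem_facetCovers hu ((mem_coverings.1 hg).1 u hu) (huv ▸ (mem_coverings.1 hg).1 v hv)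

theorem card_of_mem_image_of_mem_coverings (hg : g ∈ coverings k A) {e : Finset V}
    (he : e ∈ A.image g) : #e = k + 1 := by
  obtain ⟨u, hu, rfl⟩ := Finset.mem_image.1 he
  exact (mem_facetCovers.1 ((mem_coverings.1 hg).1 u hu)).1

/-- The data of a potential copy of `M_j^*` with `K = g a` and `C = A \ {w, a}`: the
`j`-shell `A`, its marked vertices `w` and `a`, and a `(k+1)`-set `g u` over each facet. The last
condition says that no petal of the flower at `C` in `g a` lies in `g w`. -/
structure IsStarConfig (k j : ℕ) (A : Finset V) (w a : V) (g : V → Finset V) : Prop where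
  card_shell : #A = j + 2
  mem_left : w ∈ A
  mem_right : a ∈ A
  ne : w ≠ a
  covering : g ∈ coverings k A
  inter_subset : g w ∩ g a ⊆ A

namespace IsStarConfig

theorem cover_mem (hx : IsStarConfig k j A w a g) {u : V} (hu : u ∈ A) :
    g u ∈ facetCovers k A u :=
  (mem_coverings.1 hx.covering).1 u hu

theorem card_cover (hx : IsStarConfig k j A w a g) {u : V} (hu : u ∈ A) : #(g u) = k + 1 :=
  (mem_facetCovers.1 (hx.cover_mem hu)).1

theorem erase_subset_cover (hx : IsStarConfig k j A w a g) {u : V} (hu : u ∈ A) :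
    A.erase u ⊆ g u :=
  (mem_facetCovers.1 (hx.cover_mem hu)).2.1

theorem notMem_cover (hx : IsStarConfig k j A w a g) {u : V} (hu : u ∈ A) : u ∉ g u :=
  (mem_facetCovers.1 (hx.cover_mem hu)).2.2

theorem insert_insert_sdiff (hx : IsStarConfig k j A w a g) :
    insert a (insert w (A \ {w, a})) = A := by
  have := hx.mem_left
  have := hx.mem_right
  grind

theorem card_sdiff (hx : IsStarConfig k j A w a g) : #(A \ {w, a}) = j := by
  rw [Finset.card_sdiff_of_subset (by simp [Finset.insert_subset_iff, hx.mem_left, hx.mem_right]),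
    hx.card_shell, Finset.card_pair hx.ne, Nat.add_sub_cancel]

theorem sdiff_subset (hx : IsStarConfig k j A w a g) : A \ {w, a} ⊆ g a := fun v hv =>
  hx.erase_subset_cover hx.mem_right (by grind)

theorem card_image (hx : IsStarConfig k j A w a g) : #(A.image g) = j + 2 := by
  rw [Finset.card_image_of_injOn (injOn_of_mem_coverings hx.covering), hx.card_shell]

end IsStarConfig

/-- The faces whose only covering simplices may be those of the configuration if it is to yield
exactly one copy of `M_j^*`: the facets of the shell and the petals of the flower. -/
def protectedFaces (A : Finset V) (w a : V) (g : V → Finset V) : Finset (Finset V) :=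
  A.image A.erase ∪ (g a \ (A \ {w, a})).image (insert · (A \ {w, a}))

/-- The further `(k+1)`-sets containing a protected face. -/
def interfering (k : ℕ) (A : Finset V) (w a : V) (g : V → Finset V) : Finset (Finset V) :=
  {e | #e = k + 1 ∧ e ∉ A.image g ∧ ∃ σ ∈ protectedFaces A w a g, σ ⊆ e}

theorem mem_image_of_disjoint_interfering (hd : Disjoint (interfering k A w a g : Set (Finset V)) H)
    {σ e : Finset V} (hσ : σ ∈ protectedFaces A w a g) (hσe : σ ⊆ e) (he : e ∈ H)
    (hcard : #e = k + 1) : e ∈ A.image g := by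
  by_contra hne
  exact Set.disjoint_right.1 hd he <| Finset.mem_coe.2 <|
    Finset.mem_filter.2 ⟨Finset.mem_univ _, hcard, hne, σ, hσ, hσe⟩

namespace IsStarConfig

theorem card_protectedFaces_le (hx : IsStarConfig k j A w a g) (hjk : j ≤ k) :
    #(protectedFaces A w a g) ≤ k + 3 := by
  calc #(protectedFaces A w a g)
      ≤ #A + #(g a \ (A \ {w, a})) :=
        (Finset.card_union_le _ _).trans (add_le_add Finset.card_image_le Finset.card_image_le)
    _ = (j + 2) + (k + 1 - j) := by
        rw [hx.card_shell, Finset.card_sdiff_of_subset hx.sdiff_subset, hx.card_sdiff,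
          hx.card_cover hx.mem_right]
    _ = k + 3 := by lia

theorem card_of_mem_protectedFaces (hx : IsStarConfig k j A w a g) {σ : Finset V}
    (hσ : σ ∈ protectedFaces A w a g) : #σ = j + 1 := by
  rcases Finset.mem_union.1 hσ with h | h <;> obtain ⟨u, hu, rfl⟩ := Finset.mem_image.1 h
  · rw [Finset.card_erase_of_mem hu, hx.card_shell]; rfl
  · rw [Finset.card_insert_of_notMem (Finset.mem_sdiff.1 hu).2, hx.card_sdiff]

theorem card_interfering_le (hx : IsStarConfig k j A w a g) (hjk : j ≤ k) :
    #(interfering k A w a g) ≤ (k + 3) * Fintype.card V ^ (k - j) := by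
  have hsub : interfering k A w a g ⊆
      (protectedFaces A w a g).biUnion fun σ => {e | #e = k + 1 ∧ σ ⊆ e} := by
    intro e he
    simp only [interfering, Finset.mem_filter] at he
    obtain ⟨-, hcard, -, σ, hσ, hσe⟩ := he
    simpa using ⟨σ, hσ, hcard, hσe⟩
  calc #(interfering k A w a g)
      ≤ ∑ σ ∈ protectedFaces A w a g, #{e : Finset V | #e = k + 1 ∧ σ ⊆ e} :=
        (Finset.card_le_card hsub).trans Finset.card_biUnion_le
    _ ≤ #(protectedFaces A w a g) * Fintype.card V ^ (k - j) := by
        refine Finset.sum_le_card_nsmul _ _ _ fun σ hσ => ?_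
        simpa [hx.card_of_mem_protectedFaces hσ] using card_filter_card_eq_superset_le (k + 1) σ
    _ ≤ (k + 3) * Fintype.card V ^ (k - j) := Nat.mul_le_mul_right _ (hx.card_protectedFaces_le hjk)

theorem eq_of_disjoint_interfering {g' : V → Finset V} (hx : IsStarConfig k j A w a g)
    (hx' : IsStarConfig k j A w a g') (hd : Disjoint (interfering k A w a g : Set (Finset V)) H)
    (hg' : ∀ u ∈ A, g' u ∈ H) : g' = g := by
  funext u
  by_cases hu : u ∈ A
  · obtain ⟨v, hv, hvu⟩ := Finset.mem_image.1 (mem_image_of_disjoint_interfering hd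
      (Finset.mem_union_left _ (Finset.mem_image_of_mem _ hu)) (hx'.erase_subset_cover hu)
      (hg' u hu) (hx'.card_cover hu))
    rw [← hvu, eq_of_mem_facetCovers hu (hx'.cover_mem hu) (hvu ▸ hx.cover_mem hv)]
  · rw [(mem_coverings.1 hx.covering).2 u hu,
      (mem_coverings.1 hx'.covering).2 u hu]

theorem eq_of_petal_subset_cover (hx : IsStarConfig k j A w a g) {u v : V} (hu : u ∈ A)
    (hv : v ∈ g a \ (A \ {w, a})) (hsub : insert v (A \ {w, a}) ⊆ g u) : u = a := by
  obtain ⟨hva, hvC⟩ := Finset.mem_sdiff.1 hv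
  by_contra hua
  rcases eq_or_ne u w with rfl | huw
  · have hvA := hx.inter_subset (Finset.mem_inter.2 ⟨hsub (Finset.mem_insert_self _ _), hva⟩)
    have hvu : v ≠ u := fun h => hx.notMem_cover hu (h ▸ hsub (Finset.mem_insert_self _ _))
    have hne : v ≠ a := fun h => hx.notMem_cover hx.mem_right (h ▸ hva)
    exact hvC (by simp [hvA, hvu, hne])
  · exact hx.notMem_cover hu (hsub (by simp [hu, huw, hua]))

theorem isMjStar (hx : IsStarConfig k j A w a g) (hj : 1 ≤ j) (hjk : j ≤ k)
    (hH : ∀ e ∈ H, #e = k + 1) (hg : ∀ u ∈ A, g u ∈ H)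
    (hd : Disjoint (interfering k A w a g : Set (Finset V)) H) :
    IsMjStar (generatedComplex H) k j (g a) (A \ {w, a}) w a := by
  have hk : 1 ≤ k := hj.trans hjk
  refine ⟨⟨(isSimplex_generatedComplex_iff hk hH).2 (hg a hx.mem_right),
    mem_generatedComplex_of_subset (hg a hx.mem_right) hx.sdiff_subset
      (Finset.card_pos.1 (by rw [hx.card_sdiff]; lia)), hx.card_sdiff, hx.sdiff_subset, ?_⟩,
    by simp [hx.erase_subset_cover hx.mem_right (Finset.mem_erase.2 ⟨hx.ne, hx.mem_left⟩)],
    hx.notMem_cover hx.mem_right, ?_⟩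
  · rintro _ ⟨v, hv, rfl⟩ K' hK' hsub
    rw [isSimplex_generatedComplex_iff hk hH] at hK'
    obtain ⟨u, hu, rfl⟩ := Finset.mem_image.1 (mem_image_of_disjoint_interfering hd
      (Finset.mem_union_right _ (Finset.mem_image_of_mem _ hv)) hsub hK' (hH K' hK'))
    rw [hx.eq_of_petal_subset_cover hu hv hsub]
  · rw [hx.insert_insert_sdiff]
    refine ⟨hx.card_shell, fun τ hτ hcard => ?_⟩
    obtain ⟨u, hu, huτ⟩ := Finset.exists_mem_notMem_of_card_lt_card
      (show #τ < #A by rw [hcard, hx.card_shell]; lia)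
    refine mem_generatedComplex_of_subset (hg u hu) (fun v hv => ?_) (Finset.card_pos.1 (by lia))
    exact hx.erase_subset_cover hu (by grind)

end IsStarConfig

omit [Fintype V] in
theorem IsMjStar.exists_cover {K C : Finset V} (hk : 1 ≤ k) (hj : 1 ≤ j)
    (hH : ∀ e ∈ H, #e = k + 1) (h : IsMjStar (generatedComplex H) k j K C w a) :
    ∃ c : V → Finset V, c a = K ∧ ∀ u ∈ insert a (insert w C), c u ∈ H ∧
      (insert a (insert w C)).erase u ⊆ c u := by
  obtain ⟨⟨hK, -, -, hCK, -⟩, hw, ha, hA, hshell⟩ := h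
  rw [isSimplex_generatedComplex_iff hk hH] at hK
  set A := insert a (insert w C)
  have hexists : ∀ u ∈ A, ∃ e ∈ H, A.erase u ⊆ e ∧ (u = a → e = K) := by
    intro u hu
    rcases eq_or_ne u a with rfl | hua
    · exact ⟨K, hK, by grind, fun _ => rfl⟩
    · have hcard : #(A.erase u) = j + 1 := by rw [Finset.card_erase_of_mem hu, hA]; rfl
      obtain ⟨e, he, hsub⟩ := exists_superset_of_mem_generatedComplex
        (hshell _ (Finset.erase_subset _ _) hcard) (by lia)
      exact ⟨e, he, hsub, fun h => absurd h hua⟩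
  choose! c hcH hcA hcK using hexists
  exact ⟨c, hcK a (by grind) rfl, fun u hu => ⟨hcH u hu, hcA u hu⟩⟩

omit [Fintype V] in
theorem IsMjStar.not_petal_subset {K C : Finset V} (hk : 1 ≤ k)
    (hH : ∀ e ∈ H, #e = k + 1) (h : IsMjStar (generatedComplex H) k j K C w a) {e : Finset V}
    (he : e ∈ H) (hae : a ∈ e) {v : V} (hv : v ∈ K \ C) : ¬insert v C ⊆ e := fun hsub =>
  h.2.2.1 (h.1.2.2.2.2 _ ⟨v, hv, rfl⟩ e ((isSimplex_generatedComplex_iff hk hH).2 he) hsub ▸ hae)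

theorem IsMjStar.exists_isStarConfig {K C : Finset V} (hk : 1 ≤ k) (hj : 1 ≤ j)
    (hH : ∀ e ∈ H, #e = k + 1) (h : IsMjStar (generatedComplex H) k j K C w a) :
    ∃ A g, IsStarConfig k j A w a g ∧ (∀ u ∈ A, g u ∈ H) ∧ g a = K ∧ A \ {w, a} = C := by
  obtain ⟨c, hca, hc⟩ := h.exists_cover hk hj hH
  have hnot_petal {e v} := h.not_petal_subset hk hH (e := e) (v := v)
  obtain ⟨⟨-, -, -, hCK, -⟩, hw, ha, hA, -⟩ := h
  obtain ⟨hwK, hwC⟩ := Finset.mem_sdiff.1 hw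
  set A := insert a (insert w C)
  have haA : a ∈ A := by grind
  have hwA : w ∈ A := by grind
  have hwa : w ≠ a := fun h => ha (h ▸ hwK)
  have hmem_cover : ∀ u ∈ A, u ≠ a → a ∈ c u := fun u hu hua =>
    (hc u hu).2 (Finset.mem_erase.2 ⟨hua.symm, haA⟩)
  have hnotMem : ∀ u ∈ A, u ∉ c u := by
    intro u hu huc
    rcases eq_or_ne u a with rfl | hua
    · exact ha (hca ▸ huc)
    · refine hnot_petal (hc u hu).1 (hmem_cover u hu hua) hw fun v hv => ?_
      rcases eq_or_ne v u with rfl | hvu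
      · exact huc
      · exact (hc u hu).2 (by grind)
  refine ⟨A, fun u => if u ∈ A then c u else ∅, ⟨hA, hwA, haA, hwa, ?_, ?_⟩, ?_, ?_, ?_⟩
  · simp +contextual [mem_coverings, mem_facetCovers, hnotMem, hH, hc]
  · intro v hv
    simp only [hwA, haA, hca, if_true, Finset.mem_inter] at hv
    by_contra hvA
    refine hnot_petal (hc w hwA).1 (hmem_cover w hwA hwa) (by grind)
      (Finset.insert_subset hv.1 fun x hx => (hc w hwA).2 (by grind))
  · simp +contextual [hc]
  · simp [haA, hca]
  · grind

/-- The type of candidate configurations: a shell `A`, its marked vertices `(w, a)` and a choice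
`g` of covering sets. -/
abbrev StarData (V : Type*) := Σ _ : Finset V, (V × V) × (V → Finset V)

/-- The configurations on the vertex set `V`. -/
def starConfigs (V : Type*) [Fintype V] [DecidableEq V] (k j : ℕ) : Finset (StarData V) :=
  (Finset.univ.powersetCard (j + 2)).sigma fun A =>
    {z ∈ A.offDiag ×ˢ coverings k A | z.2 z.1.1 ∩ z.2 z.1.2 ⊆ A}

theorem mem_starConfigs {x : StarData V} :
    x ∈ starConfigs V k j ↔ IsStarConfig k j x.1 x.2.1.1 x.2.1.2 x.2.2 := by
  simp only [starConfigs, Finset.mem_sigma, Finset.mem_powersetCard_univ, Finset.mem_filter,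
    Finset.mem_product, Finset.mem_offDiag]
  exact ⟨fun ⟨hA, ⟨⟨hw, ha, hne⟩, hg⟩, hi⟩ => ⟨hA, hw, ha, hne, hg, hi⟩,
    fun ⟨hA, hw, ha, hne, hg, hi⟩ => ⟨hA, ⟨⟨hw, ha, hne⟩, hg⟩, hi⟩⟩

/-- The copy of `M_j^*` described by a configuration. -/
def toMjStar (x : StarData V) : Finset V × Finset V × V × V :=
  (x.2.2 x.2.1.2, x.1 \ {x.2.1.1, x.2.1.2}, x.2.1.1, x.2.1.2)

/-- The number of copies of `M_j^*` in the complex generated by the hypergraph `H`. -/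
noncomputable def mjStarCount (k j : ℕ) (H : Set (Finset V)) : ℕ :=
  {x : Finset V × Finset V × V × V |
    IsMjStar (generatedComplex H) k j x.1 x.2.1 x.2.2.1 x.2.2.2}.ncard

theorem mjStarCount_le (hk : 1 ≤ k) (hj : 1 ≤ j) (hH : ∀ e ∈ H, #e = k + 1) :
    mjStarCount k j H ≤
      #{x ∈ starConfigs V k j | (x.1.image x.2.2 : Set (Finset V)) ⊆ H} := by
  rw [mjStarCount, ← Set.ncard_coe_finset]
  refine (Set.ncard_le_ncard (fun y hy => ?_) (Set.toFinite _)).trans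
    (Set.ncard_image_le (f := toMjStar) (Set.toFinite _))
  obtain ⟨K, C, w, a⟩ := y
  obtain ⟨A, g, hx, hg, rfl, rfl⟩ :=
    IsMjStar.exists_isStarConfig (K := K) (C := C) (w := w) (a := a) hk hj hH hy
  refine ⟨⟨A, (w, a), g⟩, ?_, rfl⟩
  simpa [mem_starConfigs, Set.subset_def] using ⟨hx, hg⟩

theorem le_mjStarCount (hj : 1 ≤ j) (hjk : j ≤ k) (hH : ∀ e ∈ H, #e = k + 1) :
    #{x ∈ starConfigs V k j | (x.1.image x.2.2 : Set (Finset V)) ⊆ H ∧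
      Disjoint (interfering k x.1 x.2.1.1 x.2.1.2 x.2.2 : Set (Finset V)) H} ≤
      mjStarCount k j H := by
  rw [mjStarCount, ← Set.ncard_coe_finset]
  refine Set.ncard_le_ncard_of_injOn toMjStar ?_ ?_ (Set.toFinite _)
  · rintro ⟨A, ⟨w, a⟩, g⟩ hx
    simp only [Finset.coe_filter, Set.mem_ofPred_eq, mem_starConfigs, Finset.coe_image,
      Set.image_subset_iff] at hx
    exact hx.1.isMjStar hj hjk hH (fun u hu => hx.2.1 hu) hx.2.2
  · rintro ⟨A, ⟨w, a⟩, g⟩ hx ⟨A', ⟨w', a'⟩, g'⟩ hx' heq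
    simp only [Finset.coe_filter, Set.mem_ofPred_eq, mem_starConfigs, Finset.coe_image,
      Set.image_subset_iff] at hx hx'
    simp only [toMjStar, Prod.mk.injEq] at heq
    obtain ⟨-, hC, rfl, rfl⟩ := heq
    obtain rfl : A = A' := by rw [← hx.1.insert_insert_sdiff, hC, hx'.1.insert_insert_sdiff]
    rw [hx.1.eq_of_disjoint_interfering hx'.1 hx.2.2 fun u hu => hx'.2.1 hu]

end Configurations

/-! ### Counting configurations -/

section Counting

variable [Fintype V] [DecidableEq V] {k j : ℕ} {A : Finset V}

theorem card_facetCovers_le (hA : #A = j + 2) {u : V} (hu : u ∈ A) :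
    #(facetCovers k A u) ≤ Fintype.card V ^ (k - j) := by
  have hcard : #(A.erase u) = j + 1 := by rw [Finset.card_erase_of_mem hu, hA]; rfl
  calc #(facetCovers k A u) ≤ #{e : Finset V | #e = k + 1 ∧ A.erase u ⊆ e} :=
        Finset.card_le_card (Finset.monotone_filter_right _ fun e _ he => ⟨he.1, he.2.1⟩)
    _ ≤ Fintype.card V ^ (k - j) := by
        simpa [hcard] using card_filter_card_eq_superset_le (k + 1) (A.erase u)

theorem card_coverings_le (hA : #A = j + 2) :
    #(coverings k A) ≤ (Fintype.card V ^ (k - j)) ^ (j + 2) := by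
  rw [coverings, card_piFinset_ite, ← hA]
  exact Finset.prod_le_pow_card _ _ _ fun u hu => card_facetCovers_le hA hu

theorem card_starConfigs_le :
    #(starConfigs V k j) ≤ (j + 2) ^ 2 * (Fintype.card V ^ (k - j + 1)) ^ (j + 2) := by
  rw [starConfigs, Finset.card_sigma]
  calc _ ≤ #((Finset.univ : Finset V).powersetCard (j + 2)) *
        ((j + 2) ^ 2 * (Fintype.card V ^ (k - j)) ^ (j + 2)) := by
        refine Finset.sum_le_card_nsmul _ _ _ fun A hA => ?_
        rw [Finset.mem_powersetCard_univ] at hA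
        refine (Finset.card_filter_le _ _).trans ?_
        rw [Finset.card_product]
        exact Nat.mul_le_mul (hA ▸ card_offDiag_le A) (card_coverings_le hA)
    _ ≤ Fintype.card V ^ (j + 2) * ((j + 2) ^ 2 * (Fintype.card V ^ (k - j)) ^ (j + 2)) := by
        rw [Finset.card_powersetCard, Finset.card_univ]
        exact Nat.mul_le_mul_right _ (Nat.choose_le_pow _ _)
    _ = _ := by rw [pow_succ _ (k - j), mul_pow]; ring

theorem union_mem_facetCovers (hjk : j ≤ k) (hA : #A = j + 2) {u : V} (hu : u ∈ A) {B : Finset V}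
    (hB : #B = k - j) (hAB : Disjoint A B) : A.erase u ∪ B ∈ facetCovers k A u := by
  have hcard : #(A.erase u ∪ B) = k + 1 := by
    rw [Finset.card_union_of_disjoint (hAB.mono_left (Finset.erase_subset _ _)),
      Finset.card_erase_of_mem hu, hA, hB]
    lia
  exact mem_facetCovers.2 ⟨hcard, Finset.subset_union_left,
    by simp [Finset.disjoint_left.1 hAB hu]⟩

theorem le_card_filter_coverings (hjk : j ≤ k) (hA : #A = j + 2) {P Q : Finset V}
    (hAP : Disjoint A P) (hAQ : Disjoint A Q) (hPQ : Disjoint P Q) {w a : V} (hwa : w ≠ a)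
    (hw : w ∈ A) (ha : a ∈ A) {m : ℕ} (hP : #P = m) (hQ : #Q = m) :
    m.choose (k - j) ^ (j + 2) ≤ #{g ∈ coverings k A | g w ∩ g a ⊆ A} := by
  set pool : V → Finset V := fun u => if u = a then P else Q with hpool
  have hdisj (u : V) : Disjoint A (pool u) := by simp only [hpool]; split_ifs <;> assumption
  set T : V → Finset (Finset V) := fun u => ((pool u).powersetCard (k - j)).image (A.erase u ∪ ·)
  have hT (u : V) : #(T u) = m.choose (k - j) := by
    rw [Finset.card_image_of_injOn, Finset.card_powersetCard]
    · congr 1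
      simp only [hpool]; split_ifs <;> assumption
    · intro B hB B' hB' h
      have hd {B : Finset V} (hB : B ∈ (pool u).powersetCard (k - j)) : Disjoint (A.erase u) B :=
        (hdisj u).mono (Finset.erase_subset _ _) (Finset.mem_powersetCard.1 hB).1
      rw [← Finset.union_sdiff_cancel_left (hd hB), ← Finset.union_sdiff_cancel_left (hd hB')]
      exact congrArg (· \ A.erase u) h
  calc m.choose (k - j) ^ (j + 2)
      = #(Fintype.piFinset fun u => if u ∈ A then T u else {∅}) := by
        rw [card_piFinset_ite, Finset.prod_congr rfl fun u _ => hT u, Finset.prod_const, hA]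
    _ ≤ _ := Finset.card_le_card fun g hg => ?_
  have hgT : ∀ u ∈ A, ∃ B ∈ (pool u).powersetCard (k - j), A.erase u ∪ B = g u := fun u hu => by
    simpa [T, hu] using Fintype.mem_piFinset.1 hg u
  refine Finset.mem_filter.2 ⟨mem_coverings.2 ⟨fun u hu => ?_, fun u hu => by
    simpa [hu] using Fintype.mem_piFinset.1 hg u⟩, ?_⟩
  · obtain ⟨B, hB, hgu⟩ := hgT u hu
    obtain ⟨hBP, hcard⟩ := Finset.mem_powersetCard.1 hB
    exact hgu ▸ union_mem_facetCovers hjk hA hu hcard ((hdisj u).mono_right hBP)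
  · obtain ⟨B, hB, hgw⟩ := hgT w hw
    obtain ⟨B', hB', hga⟩ := hgT a ha
    have hBQ : B ⊆ Q := by simpa [hpool, hwa] using (Finset.mem_powersetCard.1 hB).1
    have hBP : B' ⊆ P := by simpa [hpool] using (Finset.mem_powersetCard.1 hB').1
    have hBB' := Finset.disjoint_left.1 (hPQ.mono hBP hBQ)
    rw [← hgw, ← hga]
    grind

theorem le_card_starConfigs (hjk : j ≤ k) :
    (Fintype.card V / 3).choose (j + 2) * (Fintype.card V / 3).choose (k - j) ^ (j + 2) ≤
      #(starConfigs V k j) := by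
  obtain ⟨P, hcard, hdisj⟩ := exists_pairwiseDisjoint_card_eq_div V 3
  have hP {i i' : Fin 3} (h : i ≠ i') : Disjoint (P i) (P i') := hdisj h
  rw [starConfigs, Finset.card_sigma]
  calc _ = ∑ _A ∈ (P 0).powersetCard (j + 2), (Fintype.card V / 3).choose (k - j) ^ (j + 2) := by
        rw [Finset.sum_const, Finset.card_powersetCard, hcard, smul_eq_mul]
    _ ≤ ∑ A ∈ (P 0).powersetCard (j + 2),
          #{z ∈ A.offDiag ×ˢ coverings k A | z.2 z.1.1 ∩ z.2 z.1.2 ⊆ A} := ?_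
    _ ≤ _ := Finset.sum_le_sum_of_subset
        (Finset.powersetCard_mono (Finset.subset_univ _))
  refine Finset.sum_le_sum fun A hA => ?_
  obtain ⟨hAP, hA⟩ := Finset.mem_powersetCard.1 hA
  obtain ⟨w, hw, a, ha, hwa⟩ := Finset.one_lt_card.1 (by rw [hA]; lia : 1 < #A)
  refine (le_card_filter_coverings hjk hA ((hP (i' := 1) (by decide)).mono_left hAP)
    ((hP (i' := 2) (by decide)).mono_left hAP) (hP (by decide)) hwa hw ha (hcard 1)
    (hcard 2)).trans (Finset.card_le_card_of_injOn (fun g => ((w, a), g)) ?_ ?_)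
  · intro g hg
    simpa [hw, ha, hwa] using hg
  · exact fun g _ g' _ h => (Prod.mk.inj h).2

end Counting

theorem isTheta_card_starConfigs {k j : ℕ} (hjk : j ≤ k) :
    (fun n : ℕ => (#(starConfigs (Fin n) k j) : ℝ)) =Θ[atTop]
      fun n : ℕ => ((n : ℝ) ^ (k - j + 1)) ^ (j + 2) := by
  have hthird : Tendsto (fun n : ℕ => n / 3) atTop atTop :=
    tendsto_atTop.2 fun m => eventually_atTop.2
      ⟨3 * m, fun n hn => (Nat.le_div_iff_mul_le (by lia)).2 (by lia)⟩
  have hdiv : (fun n : ℕ => (n : ℝ)) =O[atTop] fun n : ℕ => ((n / 3 : ℕ) : ℝ) := by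
    refine IsBigO.of_bound 5 (eventually_atTop.2 ⟨3, fun n hn => ?_⟩)
    have : n ≤ 5 * (n / 3) := by lia
    simpa using (by exact_mod_cast this : (n : ℝ) ≤ 5 * ((n / 3 : ℕ) : ℝ))
  have hchoose (r : ℕ) : (fun n : ℕ => (n : ℝ) ^ r) =O[atTop]
      fun n : ℕ => ((n / 3).choose r : ℝ) :=
    (hdiv.pow r).trans ((isTheta_choose r).2.comp_tendsto hthird)
  refine ⟨IsBigO.of_bound ((j + 2) ^ 2) (.of_forall fun n => ?_), ?_⟩
  · have h := card_starConfigs_le (V := Fin n) (k := k) (j := j)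
    rw [Fintype.card_fin] at h
    simpa using (by exact_mod_cast h :
      (#(starConfigs (Fin n) k j) : ℝ) ≤ (j + 2) ^ 2 * ((n : ℝ) ^ (k - j + 1)) ^ (j + 2))
  · have hprod : (fun n : ℕ => ((n : ℝ) ^ (k - j + 1)) ^ (j + 2)) =O[atTop]
        fun n : ℕ => ((n / 3).choose (j + 2) * (n / 3).choose (k - j) ^ (j + 2) : ℝ) := by
      refine ((hchoose (j + 2)).mul ((hchoose (k - j)).pow (j + 2))).congr_left fun n => ?_
      rw [pow_succ _ (k - j), mul_pow]
      ring
    refine hprod.trans (IsBigO.of_bound 1 (.of_forall fun n => ?_))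
    have h := le_card_starConfigs (V := Fin n) hjk
    rw [Fintype.card_fin] at h
    rw [one_mul, Real.norm_of_nonneg (by positivity), Real.norm_of_nonneg (by positivity)]
    exact_mod_cast h

/-! ### Overlapping configurations -/

section Overlap

variable [Fintype V] [DecidableEq V] {k j : ℕ} {A : Finset V} {p : ℝ} (E : Finset (Finset V))

theorem pow_card_image_sdiff {g : V → Finset V} (hg : g ∈ coverings k A) :
    p ^ #(A.image g \ E) = ∏ u ∈ A, if g u ∈ E then 1 else p := by
  rw [← Finset.prod_image (f := fun e => if e ∈ E then 1 else p) (injOn_of_mem_coverings hg),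
    Finset.prod_ite, Finset.prod_const_one, one_mul, Finset.prod_const, Finset.sdiff_eq_filter]

theorem sum_coverings_pow_card_image_sdiff :
    ∑ g ∈ coverings k A, p ^ #(A.image g \ E) =
      ∏ u ∈ A, ∑ e ∈ facetCovers k A u, if e ∈ E then 1 else p := by
  rw [Finset.sum_congr rfl fun g hg => pow_card_image_sdiff E hg]
  exact sum_piFinset_ite_prod A (facetCovers k A) ∅ fun _ e => if e ∈ E then 1 else p

theorem sum_facetCovers_le (hp : 0 ≤ p) (hA : #A = j + 2) {u : V} (hu : u ∈ A) :
    ∑ e ∈ facetCovers k A u, (if e ∈ E then 1 else p) ≤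
      #{e ∈ facetCovers k A u | e ∈ E} + p * Fintype.card V ^ (k - j) := by
  rw [Finset.sum_ite, Finset.sum_const, Finset.sum_const, nsmul_one, nsmul_eq_mul, mul_comm p]
  gcongr
  exact_mod_cast (Finset.card_filter_le _ _).trans (card_facetCovers_le hA hu)

theorem sum_facetCovers_nonneg (hp : 0 ≤ p) (u : V) :
    0 ≤ ∑ e ∈ facetCovers k A u, if e ∈ E then 1 else p :=
  Finset.sum_nonneg fun e _ => by split_ifs <;> positivity

theorem sum_facetCovers_le_card_add_one (hp : 0 ≤ p) (hQ : p * Fintype.card V ^ (k - j) ≤ 1)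
    (hA : #A = j + 2) {u : V} (hu : u ∈ A) :
    ∑ e ∈ facetCovers k A u, (if e ∈ E then 1 else p) ≤ #E + 1 := by
  refine (sum_facetCovers_le E hp hA hu).trans ?_
  gcongr
  exact fun e he => (Finset.mem_filter.1 he).2

theorem sum_facetCovers_le_of_notMem (hp : 0 ≤ p) (hA : #A = j + 2) {u v : V} (hu : u ∈ A)
    (hv : v ∈ A) (huv : v ≠ u) (hvE : v ∉ E.biUnion id) :
    ∑ e ∈ facetCovers k A u, (if e ∈ E then 1 else p) ≤ p * Fintype.card V ^ (k - j) := by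
  have hempty : {e ∈ facetCovers k A u | e ∈ E} = ∅ := by
    refine Finset.filter_eq_empty_iff.2 fun e he heE => hvE (Finset.mem_biUnion.2 ⟨e, heE, ?_⟩)
    exact (mem_facetCovers.1 he).2.1 (Finset.mem_erase.2 ⟨huv, hv⟩)
  simpa [hempty] using sum_facetCovers_le (k := k) E hp hA hu

theorem sum_coverings_le (hp : 0 ≤ p) (hQ : p * Fintype.card V ^ (k - j) ≤ 1)
    (hA : #A = j + 2) :
    ∑ g ∈ coverings k A, p ^ #(A.image g \ E) ≤ (#E + 1) ^ (j + 2) *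
      ((if A ⊆ E.biUnion id then 1 else 0) + p * Fintype.card V ^ (k - j)) := by
  have hone {u : V} (hu : u ∈ A) := sum_facetCovers_le_card_add_one E hp hQ hA hu
  have hnonneg := sum_facetCovers_nonneg (k := k) (A := A) E hp
  rw [sum_coverings_pow_card_image_sdiff]
  split_ifs with hAE
  · calc ∏ u ∈ A, ∑ e ∈ facetCovers k A u, (if e ∈ E then 1 else p)
        ≤ ∏ _u ∈ A, ((#E : ℝ) + 1) :=
          Finset.prod_le_prod (fun u _ => hnonneg u) fun u hu => hone hu
      _ = (#E + 1) ^ (j + 2) := by rw [Finset.prod_const, hA]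
      _ ≤ _ := le_mul_of_one_le_right (by positivity) (le_add_of_nonneg_right (by positivity))
  · obtain ⟨v, hv, hvE⟩ := Finset.not_subset.1 hAE
    obtain ⟨u, hu, huv⟩ := Finset.exists_mem_ne (by rw [hA]; lia : 1 < #A) v
    rw [← Finset.prod_erase_mul _ _ hu, zero_add]
    refine mul_le_mul ?_ (sum_facetCovers_le_of_notMem E hp hA hu hv huv.symm hvE) (hnonneg u)
      (by positivity)
    calc ∏ u ∈ A.erase u, ∑ e ∈ facetCovers k A u, (if e ∈ E then 1 else p)
        ≤ ∏ _u ∈ A.erase u, ((#E : ℝ) + 1) :=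
          Finset.prod_le_prod (fun u _ => hnonneg u) fun u hu => hone (Finset.mem_of_mem_erase hu)
      _ = (#E + 1) ^ (j + 1) := by
          rw [Finset.prod_const, Finset.card_erase_of_mem hu, hA]; rfl
      _ ≤ (#E + 1) ^ (j + 2) := pow_le_pow_right₀ (by simp) (by lia)

theorem sum_offDiag_product_coverings_le (hp : 0 ≤ p) (hQ : p * Fintype.card V ^ (k - j) ≤ 1)
    (hA : #A = j + 2) :
    ∑ z ∈ A.offDiag ×ˢ coverings k A, p ^ #(A.image z.2 \ E) ≤
      (j + 2) ^ 2 * ((#E + 1) ^ (j + 2) *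
        ((if A ⊆ E.biUnion id then 1 else 0) + p * Fintype.card V ^ (k - j))) := by
  have hoff : (#A.offDiag : ℝ) ≤ (j + 2) ^ 2 := by exact_mod_cast hA ▸ card_offDiag_le A
  rw [Finset.sum_product]
  dsimp only
  rw [Finset.sum_const, nsmul_eq_mul]
  exact mul_le_mul hoff (sum_coverings_le E hp hQ hA)
    (Finset.sum_nonneg fun _ _ => by positivity) (by positivity)

theorem card_filter_exists_erase_subset_le (D : Finset V) :
    #{A : Finset V | ∃ u ∈ A, A.erase u ⊆ D} ≤ Fintype.card V * 2 ^ #D := by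
  have hsub : ({A | ∃ u ∈ A, A.erase u ⊆ D} : Finset (Finset V)) ⊆
      (Finset.univ ×ˢ D.powerset).image fun x => insert x.1 x.2 := by
    intro A hA
    obtain ⟨u, hu, hAu⟩ := (Finset.mem_filter.1 hA).2
    exact Finset.mem_image.2
      ⟨(u, A.erase u), by simpa using hAu, Finset.insert_erase hu⟩
  calc _ ≤ #((Finset.univ : Finset V) ×ˢ D.powerset) :=
        (Finset.card_le_card hsub).trans Finset.card_image_le
    _ = Fintype.card V * 2 ^ #D := by
        rw [Finset.card_product, Finset.card_powerset, Finset.card_univ]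

theorem exists_erase_subset_biUnion {g : V → Finset V} (hg : g ∈ coverings k A)
    (hE : ¬Disjoint (A.image g) E) : ∃ u ∈ A, A.erase u ⊆ E.biUnion id := by
  obtain ⟨e, he, heE⟩ := Finset.not_disjoint_iff.1 hE
  obtain ⟨u, hu, rfl⟩ := Finset.mem_image.1 he
  exact ⟨u, hu, (mem_facetCovers.1 ((mem_coverings.1 hg).1 u hu)).2.1.trans
    (Finset.subset_biUnion_of_mem id heE)⟩

theorem sum_starConfigs_not_disjoint_le (hp : 0 ≤ p) (hQ : p * Fintype.card V ^ (k - j) ≤ 1) :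
    ∑ x ∈ starConfigs V k j with ¬Disjoint (x.1.image x.2.2) E, p ^ #(x.1.image x.2.2 \ E) ≤
      (j + 2) ^ 2 * (#E + 1) ^ (j + 2) * 2 ^ #(E.biUnion id) *
        (1 + Fintype.card V * (p * Fintype.card V ^ (k - j))) := by
  set D := E.biUnion id
  set Q := p * (Fintype.card V : ℝ) ^ (k - j)
  set T : Finset (Finset V) := {A | #A = j + 2 ∧ ∃ u ∈ A, A.erase u ⊆ D}
  have hsub : {x ∈ starConfigs V k j | ¬Disjoint (x.1.image x.2.2) E} ⊆
      T.sigma fun A => A.offDiag ×ˢ coverings k A := by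
    intro x hx
    obtain ⟨hx, hE⟩ := Finset.mem_filter.1 hx
    have hx' := mem_starConfigs.1 hx
    simp only [T, Finset.mem_sigma, Finset.mem_filter_univ, Finset.mem_product,
      Finset.mem_offDiag]
    exact ⟨⟨hx'.card_shell, exists_erase_subset_biUnion E hx'.covering hE⟩,
      ⟨hx'.mem_left, hx'.mem_right, hx'.ne⟩, hx'.covering⟩
  have hin : (#{A ∈ T | A ⊆ D} : ℝ) ≤ 2 ^ #D := by
    exact_mod_cast (Finset.card_le_card fun A hA =>
      Finset.mem_powerset.2 (Finset.mem_filter.1 hA).2).trans_eq (Finset.card_powerset D)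
  have hT : (#T : ℝ) ≤ Fintype.card V * 2 ^ #D := by
    have hsubT : T ⊆ ({A | ∃ u ∈ A, A.erase u ⊆ D} : Finset (Finset V)) :=
      Finset.monotone_filter_right _ fun A _ hA => hA.2
    exact_mod_cast (Finset.card_le_card hsubT).trans (card_filter_exists_erase_subset_le D)
  calc _ ≤ ∑ A ∈ T, ∑ z ∈ A.offDiag ×ˢ coverings k A, p ^ #(A.image z.2 \ E) := by
        rw [Finset.sum_sigma']
        exact Finset.sum_le_sum_of_subset_of_nonneg hsub fun _ _ _ => by positivity
    _ ≤ ∑ A ∈ T, (j + 2) ^ 2 * ((#E + 1) ^ (j + 2) * ((if A ⊆ D then 1 else 0) + Q)) :=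
        Finset.sum_le_sum fun A hA =>
          sum_offDiag_product_coverings_le E hp hQ (Finset.mem_filter.1 hA).2.1
    _ = (j + 2) ^ 2 * (#E + 1) ^ (j + 2) * (#{A ∈ T | A ⊆ D} + #T * Q) := by
        rw [← Finset.mul_sum, ← Finset.mul_sum, Finset.sum_add_distrib, Finset.sum_boole,
          Finset.sum_const, nsmul_eq_mul, mul_assoc]
    _ ≤ (j + 2) ^ 2 * (#E + 1) ^ (j + 2) * (2 ^ #D + Fintype.card V * 2 ^ #D * Q) := by gcongr
    _ = _ := by ring

theorem IsStarConfig.sum_starConfigs_not_disjoint_le {w a : V} {g : V → Finset V}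
    (hx : IsStarConfig k j A w a g) (hp : 0 ≤ p) (hQ : p * Fintype.card V ^ (k - j) ≤ 1) :
    ∑ y ∈ starConfigs V k j with ¬Disjoint (y.1.image y.2.2) (A.image g),
        p ^ #(y.1.image y.2.2 \ A.image g) ≤
      (j + 2) ^ 2 * (j + 3) ^ (j + 2) * 2 ^ ((j + 2) * (k + 1)) *
        (1 + Fintype.card V * (p * Fintype.card V ^ (k - j))) := by
  have hD : #((A.image g).biUnion id) ≤ (j + 2) * (k + 1) :=
    hx.card_image ▸ Finset.card_biUnion_le_card_mul _ _ _
      fun e he => (card_of_mem_image_of_mem_coverings hx.covering he).le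
  have hcard : (#(A.image g) : ℝ) + 1 = j + 3 := by rw [hx.card_image]; push_cast; ring
  refine (RSC.sum_starConfigs_not_disjoint_le (A.image g) hp hQ).trans ?_
  rw [hcard]
  gcongr
  norm_num

end Overlap

/-! ### Moments -/

section Moments

/-- The distribution of the binomial random `(k+1)`-uniform hypergraph on `V`. -/
noncomputable abbrev randomHypergraph (V : Type*) (k : ℕ) (p : unitInterval) :
    Measure (Set (Finset V)) :=
  setBernoulli {e | #e = k + 1} p

/-- The expected number of configurations all of whose covering sets are present in
`randomHypergraph V k p`. -/
noncomputable def expectedConfigs (V : Type*) [Fintype V] [DecidableEq V] (k j : ℕ)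
    (p : unitInterval) : ℝ :=
  #(starConfigs V k j) * (p : ℝ) ^ (j + 2)

theorem ae_randomHypergraph_card [Finite V] {k : ℕ} (p : unitInterval) :
    ∀ᵐ H ∂randomHypergraph V k p, ∀ e ∈ H, #e = k + 1 :=
  setBernoulli_ae_subset

variable [Fintype V] [DecidableEq V] {k j : ℕ} (p : unitInterval)

theorem image_subset_of_mem_starConfigs {x : StarData V} (hx : x ∈ starConfigs V k j) :
    ((x.1.image x.2.2 : Finset (Finset V)) : Set (Finset V)) ⊆ {e | #e = k + 1} := fun _ he =>
  card_of_mem_image_of_mem_coverings (mem_starConfigs.1 hx).covering he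

theorem card_image_of_mem_starConfigs {x : StarData V} (hx : x ∈ starConfigs V k j) :
    #(x.1.image x.2.2) = j + 2 :=
  (mem_starConfigs.1 hx).card_image

theorem integral_mjStarCount_le (hj : 1 ≤ j) (hk : 1 ≤ k) :
    ∫ H, (mjStarCount k j H : ℝ) ∂randomHypergraph V k p ≤ expectedConfigs V k j p := by
  calc ∫ H, (mjStarCount k j H : ℝ) ∂randomHypergraph V k p
      ≤ ∫ H, (#{x ∈ starConfigs V k j | ((x.1.image x.2.2 : Finset _) : Set (Finset V)) ⊆ H} : ℝ)
          ∂randomHypergraph V k p :=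
        integral_mono_ae .of_finite .of_finite <| (ae_randomHypergraph_card p).mono fun H hH =>
          Nat.cast_le.2 (mjStarCount_le hk hj hH)
    _ = ∑ x ∈ starConfigs V k j, (p : ℝ) ^ #(x.1.image x.2.2) :=
        integral_card_filter_subset_setBernoulli p fun x => image_subset_of_mem_starConfigs
    _ = expectedConfigs V k j p := by
        rw [Finset.sum_congr rfl fun x hx => by rw [card_image_of_mem_starConfigs hx],
          Finset.sum_const, nsmul_eq_mul, expectedConfigs]

theorem le_integral_mjStarCount (hj : 1 ≤ j) (hjk : j ≤ k) :
    expectedConfigs V k j p * (1 - (k + 3) * (p * Fintype.card V ^ (k - j))) ≤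
      ∫ H, (mjStarCount k j H : ℝ) ∂randomHypergraph V k p := by
  have hterm (x : StarData V) (hx : x ∈ starConfigs V k j) :
      (p : ℝ) ^ (j + 2) * (1 - (k + 3) * (p * Fintype.card V ^ (k - j))) ≤
        (p : ℝ) ^ #(x.1.image x.2.2) * (1 - #(interfering k x.1 x.2.1.1 x.2.1.2 x.2.2) * p) := by
    have hcard : (#(interfering k x.1 x.2.1.1 x.2.1.2 x.2.2) : ℝ) ≤
        (k + 3) * Fintype.card V ^ (k - j) := by
      exact_mod_cast (mem_starConfigs.1 hx).card_interfering_le hjk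
    rw [card_image_of_mem_starConfigs hx]
    have hp := p.2.1
    refine mul_le_mul_of_nonneg_left ?_ (by positivity)
    linarith [mul_le_mul_of_nonneg_right hcard hp]
  calc _ = ∑ _x ∈ starConfigs V k j,
          (p : ℝ) ^ (j + 2) * (1 - (k + 3) * (p * Fintype.card V ^ (k - j))) := by
        rw [Finset.sum_const, nsmul_eq_mul, expectedConfigs, mul_assoc]
    _ ≤ _ := Finset.sum_le_sum hterm
    _ ≤ ∫ H, (#{x ∈ starConfigs V k j | ((x.1.image x.2.2 : Finset _) : Set (Finset V)) ⊆ H ∧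
          Disjoint (interfering k x.1 x.2.1.1 x.2.1.2 x.2.2 : Set (Finset V)) H} : ℝ)
            ∂randomHypergraph V k p := by
        refine le_integral_card_filter_subset_disjoint_setBernoulli p
          (fun x => image_subset_of_mem_starConfigs) (fun x _ e he => ?_) fun x _ => ?_
        · exact (Finset.mem_filter.1 (Finset.mem_coe.1 he)).2.1
        · exact Finset.disjoint_right.2 fun e he => (Finset.mem_filter.1 he).2.2.1
    _ ≤ _ := integral_mono_ae .of_finite .of_finite <| (ae_randomHypergraph_card p).mono
        fun H hH => Nat.cast_le.2 (le_mjStarCount hj hjk hH)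

theorem integral_mjStarCount_sq_le (hj : 1 ≤ j) (hk : 1 ≤ k)
    (hQ : (p : ℝ) * Fintype.card V ^ (k - j) ≤ 1) :
    ∫ H, (mjStarCount k j H : ℝ) ^ 2 ∂randomHypergraph V k p ≤
      expectedConfigs V k j p ^ 2 + expectedConfigs V k j p *
        ((j + 2) ^ 2 * (j + 3) ^ (j + 2) * 2 ^ ((j + 2) * (k + 1)) *
          (1 + Fintype.card V * (p * Fintype.card V ^ (k - j)))) := by
  calc ∫ H, (mjStarCount k j H : ℝ) ^ 2 ∂randomHypergraph V k p
      ≤ ∫ H, (#{x ∈ starConfigs V k j | ((x.1.image x.2.2 : Finset _) : Set (Finset V)) ⊆ H} : ℝ)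
          ^ 2 ∂randomHypergraph V k p :=
        integral_mono_ae .of_finite .of_finite <| (ae_randomHypergraph_card p).mono fun H hH =>
          pow_le_pow_left₀ (Nat.cast_nonneg _) (Nat.cast_le.2 (mjStarCount_le hk hj hH)) 2
    _ = ∑ x ∈ starConfigs V k j, ∑ y ∈ starConfigs V k j,
          (p : ℝ) ^ #(x.1.image x.2.2 ∪ y.1.image y.2.2) :=
        integral_card_filter_subset_sq_setBernoulli p fun x => image_subset_of_mem_starConfigs
    _ ≤ _ := sum_sum_pow_card_union_le p.2.1 (fun x => card_image_of_mem_starConfigs) fun x hx =>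
        (mem_starConfigs.1 hx).sum_starConfigs_not_disjoint_le p.2.1 hQ

theorem variance_mjStarCount_le (hj : 1 ≤ j) (hjk : j ≤ k)
    (hQ : (p : ℝ) * Fintype.card V ^ (k - j) ≤ 1) :
    Var[fun H => (mjStarCount k j H : ℝ); randomHypergraph V k p] ≤
      2 * (k + 3) * (p * Fintype.card V ^ (k - j)) * expectedConfigs V k j p ^ 2 +
        (j + 2) ^ 2 * (j + 3) ^ (j + 2) * 2 ^ ((j + 2) * (k + 1)) *
          ((1 + Fintype.card V * (p * Fintype.card V ^ (k - j))) * expectedConfigs V k j p) := by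
  have hle := integral_mjStarCount_le (V := V) p hj (hj.trans hjk)
  have hge := le_integral_mjStarCount (V := V) p hj hjk
  have hsq := integral_mjStarCount_sq_le (V := V) p hj (hj.trans hjk) hQ
  have hnonneg : 0 ≤ ∫ H, (mjStarCount k j H : ℝ) ∂randomHypergraph V k p :=
    integral_nonneg fun _ => Nat.cast_nonneg _
  rw [variance_eq_sub .of_discrete]
  simp only [Pi.pow_apply]
  set y := expectedConfigs V k j p
  set m := ∫ H, (mjStarCount k j H : ℝ) ∂randomHypergraph V k p
  have hdiff : (y - m) * (y + m) ≤ (y - m) * (2 * y) :=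
    mul_le_mul_of_nonneg_left (by linarith) (by linarith)
  have hgap : (y - m) * (2 * y) ≤ (y * ((k + 3) * (p * Fintype.card V ^ (k - j)))) * (2 * y) :=
    mul_le_mul_of_nonneg_right (by linarith) (by linarith)
  linarith

end Moments

/-! ### Asymptotics -/

theorem exists_bounds_of_isTheta {α : Type*} {l : Filter α} {f g : α → ℝ} (h : f =Θ[l] g)
    (hf : ∀ᶠ x in l, 0 ≤ f x) (hg : ∀ᶠ x in l, 0 ≤ g x) :
    ∃ c₁ c₂ : ℝ, 0 < c₁ ∧ c₁ ≤ c₂ ∧ ∀ᶠ x in l, c₁ * g x ≤ f x ∧ f x ≤ c₂ * g x := by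
  obtain ⟨c₂, -, hfg⟩ := h.1.exists_pos
  obtain ⟨c, hc, hgf⟩ := h.2.exists_pos
  refine ⟨c⁻¹, max c⁻¹ c₂, inv_pos.2 hc, le_max_left _ _, ?_⟩
  filter_upwards [hfg.bound, hgf.bound, hf, hg] with x hfgx hgfx hfx hgx
  rw [Real.norm_of_nonneg hfx, Real.norm_of_nonneg hgx] at hfgx hgfx
  exact ⟨(inv_mul_le_iff₀ hc).2 hgfx,
    hfgx.trans (mul_le_mul_of_nonneg_right (le_max_right _ _) hgx)⟩

theorem tendsto_measure_abs_sub_integral_le {ι : Type*} {l : Filter ι} {Ω : ι → Type*}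
    {m : ∀ i, MeasurableSpace (Ω i)} {μ : ∀ i, Measure (Ω i)} [∀ i, IsProbabilityMeasure (μ i)]
    {X : ∀ i, Ω i → ℝ} (hX : ∀ i, MemLp (X i) 2 (μ i))
    (hvar : (fun i => Var[X i; μ i]) =o[l] fun i => (∫ ω, X i ω ∂μ i) ^ 2)
    (hpos : ∀ᶠ i in l, 0 < ∫ ω, X i ω ∂μ i) {ε : ℝ} (hε : 0 < ε) :
    Tendsto (fun i => μ i {ω | |X i ω - ∫ ω', X i ω' ∂μ i| ≤ ε * ∫ ω', X i ω' ∂μ i}) l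
      (nhds 1) := by
  have hratio : Tendsto (fun i => Var[X i; μ i] / (ε * ∫ ω, X i ω ∂μ i) ^ 2) l (nhds 0) := by
    have h := hvar.tendsto_div_nhds_zero.const_mul (ε ^ 2)⁻¹
    rw [mul_zero] at h
    refine h.congr fun i => ?_
    rw [mul_pow]
    ring
  have hlower : Tendsto (fun i => 1 - ENNReal.ofReal (Var[X i; μ i] / (ε * ∫ ω, X i ω ∂μ i) ^ 2))
      l (nhds 1) := by
    simpa using ENNReal.Tendsto.sub tendsto_const_nhds (ENNReal.tendsto_ofReal hratio)
      (.inl ENNReal.one_ne_top)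
  refine tendsto_of_tendsto_of_tendsto_of_le_of_le' hlower tendsto_const_nhds ?_
    (.of_forall fun i => prob_le_one)
  filter_upwards [hpos] with i hi
  set s := {ω | |X i ω - ∫ ω', X i ω' ∂μ i| ≤ ε * ∫ ω', X i ω' ∂μ i}
  have hcompl : μ i sᶜ ≤ ENNReal.ofReal (Var[X i; μ i] / (ε * ∫ ω, X i ω ∂μ i) ^ 2) := by
    refine (measure_mono fun ω hω => ?_).trans
      (meas_ge_le_variance_div_sq (hX i) (mul_pos hε hi))
    exact (not_le.1 (Set.notMem_ofPred_iff.1 hω)).le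
  refine tsub_le_iff_right.2 ?_
  calc 1 = μ i (s ∪ sᶜ) := by rw [Set.union_compl_self, measure_univ]
    _ ≤ μ i s + μ i sᶜ := measure_union_le _ _
    _ ≤ _ := by gcongr

section Asymptotics

variable {k j : ℕ} {p : ℕ → unitInterval}

theorem isTheta_expectedConfigs (hjk : j ≤ k) :
    (fun n : ℕ => expectedConfigs (Fin n) k j (p n)) =Θ[atTop]
      fun n : ℕ => ((n : ℝ) * (p n * (n : ℝ) ^ (k - j))) ^ (j + 2) := by
  have h := (isTheta_card_starConfigs hjk).mul
    (isTheta_refl (fun n => (p n : ℝ) ^ (j + 2)) atTop)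
  refine h.trans_eventuallyEq (.of_forall fun n => ?_)
  beta_reduce
  rw [← mul_pow, pow_succ]
  ring

theorem isEquivalent_integral_mjStarCount (hj : 1 ≤ j) (hjk : j ≤ k)
    (hQ : Tendsto (fun n : ℕ => (p n : ℝ) * (n : ℝ) ^ (k - j)) atTop (nhds 0)) :
    (fun n : ℕ => ∫ H, (mjStarCount k j H : ℝ) ∂randomHypergraph (Fin n) k (p n)) ~[atTop]
      fun n : ℕ => expectedConfigs (Fin n) k j (p n) := by
  have hlittle : (fun n : ℕ => (k + 3) * ((p n : ℝ) * (n : ℝ) ^ (k - j)) *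
      expectedConfigs (Fin n) k j (p n)) =o[atTop]
        fun n : ℕ => expectedConfigs (Fin n) k j (p n) := by
    have h := hQ.const_mul ((k : ℝ) + 3)
    rw [mul_zero] at h
    simpa using ((isLittleO_one_iff ℝ).2 h).mul_isBigO
      (isBigO_refl (fun n : ℕ => expectedConfigs (Fin n) k j (p n)) atTop)
  refine IsBigO.trans_isLittleO (.of_bound' (.of_forall fun n => ?_)) hlittle
  have hle := integral_mjStarCount_le (V := Fin n) (p n) hj (hj.trans hjk)
  have hge := le_integral_mjStarCount (V := Fin n) (p n) hj hjk
  rw [Fintype.card_fin] at hge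
  rw [Pi.sub_apply, Real.norm_of_nonpos (by linarith)]
  exact le_trans (by linarith) (le_abs_self _)

theorem isLittleO_variance_mjStarCount (hj : 1 ≤ j) (hjk : j ≤ k)
    (hQ : Tendsto (fun n : ℕ => (p n : ℝ) * (n : ℝ) ^ (k - j)) atTop (nhds 0))
    (hinfty : Tendsto (fun n : ℕ => (n : ℝ) * (p n * (n : ℝ) ^ (k - j))) atTop atTop) :
    (fun n : ℕ => Var[fun H => (mjStarCount k j H : ℝ); randomHypergraph (Fin n) k (p n)])
      =o[atTop] fun n : ℕ => expectedConfigs (Fin n) k j (p n) ^ 2 := by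
  set y : ℕ → ℝ := fun n => expectedConfigs (Fin n) k j (p n)
  set mean : ℕ → ℝ := fun n => (n : ℝ) * (p n * (n : ℝ) ^ (k - j))
  have hmean : (fun n => 1 + mean n) =o[atTop] y := by
    have hone : (fun _ => (1 : ℝ)) =o[atTop] mean :=
      (isLittleO_one_left_iff ℝ).2 (tendsto_norm_atTop_atTop.comp hinfty)
    have hpow : mean =o[atTop] fun n => mean n ^ (j + 2) := by
      have h := isLittleO_pow_pow_atTop_of_lt (𝕜 := ℝ) (by lia : 1 < j + 2)
      simpa [Function.comp_def] using h.comp_tendsto hinfty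
    exact ((hone.isBigO.add (isBigO_refl _ _)).trans_isLittleO hpow).trans_isBigO
      (isTheta_expectedConfigs hjk).2
  have hfirst : (fun n => 2 * (k + 3) * ((p n : ℝ) * (n : ℝ) ^ (k - j)) * y n ^ 2) =o[atTop]
      fun n => y n ^ 2 := by
    have h := hQ.const_mul (2 * ((k : ℝ) + 3))
    rw [mul_zero] at h
    simpa using ((isLittleO_one_iff ℝ).2 h).mul_isBigO
      (isBigO_refl (fun n => y n ^ 2) atTop)
  have hsecond : (fun n => (j + 2) ^ 2 * (j + 3) ^ (j + 2) * 2 ^ ((j + 2) * (k + 1)) *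
      ((1 + mean n) * y n)) =o[atTop] fun n => y n ^ 2 :=
    ((hmean.mul_isBigO (isBigO_refl y atTop)).const_mul_left _).congr_right fun n => (sq _).symm
  refine IsBigO.trans_isLittleO (.of_bound' ?_) (hfirst.add hsecond)
  filter_upwards [hQ.eventually_le_const one_pos] with n hn
  have hvar := variance_mjStarCount_le (V := Fin n) (p n) hj hjk (by rwa [Fintype.card_fin])
  rw [Fintype.card_fin] at hvar
  rw [Real.norm_of_nonneg (variance_nonneg _ _)]
  exact hvar.trans (le_abs_self _)

theorem isTheta_integral_mjStarCount (hj : 1 ≤ j) (hjk : j ≤ k)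
    (hQ : Tendsto (fun n : ℕ => (p n : ℝ) * (n : ℝ) ^ (k - j)) atTop (nhds 0)) :
    (fun n : ℕ => ∫ H, (mjStarCount k j H : ℝ) ∂randomHypergraph (Fin n) k (p n)) =Θ[atTop]
      fun n : ℕ => ((n : ℝ) * (p n * (n : ℝ) ^ (k - j))) ^ (j + 2) :=
  (isEquivalent_integral_mjStarCount hj hjk hQ).isTheta.trans (isTheta_expectedConfigs hjk)

theorem tendsto_randomHypergraph_mjStarCount (hj : 1 ≤ j) (hjk : j ≤ k)
    (hQ : Tendsto (fun n : ℕ => (p n : ℝ) * (n : ℝ) ^ (k - j)) atTop (nhds 0))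
    (hinfty : Tendsto (fun n : ℕ => (n : ℝ) * (p n * (n : ℝ) ^ (k - j))) atTop atTop)
    {ε : ℝ} (hε : 0 < ε) :
    Tendsto (fun n : ℕ => randomHypergraph (Fin n) k (p n) {H |
      |(mjStarCount k j H : ℝ) -
          ∫ H', (mjStarCount k j H' : ℝ) ∂randomHypergraph (Fin n) k (p n)| ≤
        ε * ∫ H', (mjStarCount k j H' : ℝ) ∂randomHypergraph (Fin n) k (p n)})
      atTop (nhds 1) := by
  refine tendsto_measure_abs_sub_integral_le (fun n => .of_discrete) ?_ ?_ hε
  · exact (isLittleO_variance_mjStarCount hj hjk hQ hinfty).trans_isBigO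
      ((isEquivalent_integral_mjStarCount hj hjk hQ).isTheta.2.pow 2)
  · filter_upwards [(isTheta_integral_mjStarCount hj hjk hQ).2.eq_zero_imp,
      hinfty.eventually_gt_atTop 0] with n hzero hn
    exact (integral_nonneg fun _ => Nat.cast_nonneg _).lt_of_ne'
      fun h => (pow_pos hn _).ne' (hzero h)

end Asymptotics

/-! ### The process of birth times -/

theorem complexAt_eq_generatedComplex (k n : ℕ) (t : Finset (Fin n) → ℝ) (p : ℝ) :
    complexAt k n t p = generatedComplex {e | e ∈ {e | #e = k + 1} ∧ t e ≤ p} := by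
  ext A
  simp [complexAt, generatedComplex, and_assoc]

theorem countMjStar_complexAt (k j n : ℕ) (t : Finset (Fin n) → ℝ) (p : ℝ) :
    countMjStar k j (complexAt k n t p) =
      mjStarCount k j {e | e ∈ {e | #e = k + 1} ∧ t e ≤ p} := by
  rw [complexAt_eq_generatedComplex, countMjStar, mjStarCount]

theorem integral_countMjStar_complexAt (k j n : ℕ) (p : unitInterval) :
    ∫ t, (countMjStar k j (complexAt k n t p) : ℝ) ∂birthMeasure n =
      ∫ H, (mjStarCount k j H : ℝ) ∂randomHypergraph (Fin n) k p := by
  simp_rw [countMjStar_complexAt]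
  exact (isSetBernoulli_setOf_le_of_uniform _ p).integral_comp
    (f := fun H => (mjStarCount k j H : ℝ)) .of_discrete

theorem birthMeasure_countMjStar_complexAt (k j n : ℕ) (p : unitInterval) (s : Set ℕ) :
    birthMeasure n {t | countMjStar k j (complexAt k n t p) ∈ s} =
      randomHypergraph (Fin n) k p {H | mjStarCount k j H ∈ s} := by
  simp_rw [countMjStar_complexAt]
  exact (isSetBernoulli_setOf_le_of_uniform _ p).measure_eq
    (p := fun H => mjStarCount k j H ∈ s) .of_discrete

/-! ### The threshold `p_{j-1}^-` -/

section Threshold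

variable (k j : ℕ)

theorem isEquivalent_mul_pjPrevMinus :
    (fun n : ℕ => (n : ℝ) * (pjPrevMinus k j n * (n : ℝ) ^ (k - j))) ~[atTop]
      fun n : ℕ => (j * (k - j + 1).factorial / (k - j + 2 : ℕ) : ℝ) * Real.log n := by
  have hlog : Tendsto (fun n : ℕ => Real.log n) atTop atTop :=
    Real.tendsto_log_atTop.comp tendsto_natCast_atTop_atTop
  have hone : (fun n : ℕ => 1 - 1 / √(Real.log n)) ~[atTop] fun _ => (1 : ℝ) := by
    refine (isEquivalent_const_iff_tendsto one_ne_zero).2 ?_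
    simpa using (tendsto_inv_atTop_zero.comp (Real.tendsto_sqrt_atTop.comp hlog)).const_sub 1
  have hmul := hone.mul (IsEquivalent.refl (u := fun n : ℕ =>
    (j * (k - j + 1).factorial / (k - j + 2 : ℕ) : ℝ) * Real.log n) (l := atTop))
  refine (hmul.congr_left ?_).congr_right (.of_forall fun n => one_mul _)
  filter_upwards [eventually_ne_atTop 0] with n hn
  have hn' : (n : ℝ) ≠ 0 := Nat.cast_ne_zero.2 hn
  simp only [Pi.mul_apply, pjPrevMinus, pow_succ]
  field_simp

variable {k j}

theorem isTheta_mul_pjPrevMinus (hj : 1 ≤ j) :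
    (fun n : ℕ => (n : ℝ) * (pjPrevMinus k j n * (n : ℝ) ^ (k - j))) =Θ[atTop]
      fun n : ℕ => Real.log n :=
  (isEquivalent_mul_pjPrevMinus k j).isTheta.trans
    ((isTheta_const_mul_left (by positivity)).2 (isTheta_refl _ _))

theorem tendsto_mul_pjPrevMinus_atTop (hj : 1 ≤ j) :
    Tendsto (fun n : ℕ => (n : ℝ) * (pjPrevMinus k j n * (n : ℝ) ^ (k - j))) atTop atTop :=
  (isEquivalent_mul_pjPrevMinus k j).symm.tendsto_atTop <|
    (Real.tendsto_log_atTop.comp tendsto_natCast_atTop_atTop).const_mul_atTop (by positivity)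

theorem tendsto_pjPrevMinus_mul_pow (hj : 1 ≤ j) :
    Tendsto (fun n : ℕ => pjPrevMinus k j n * (n : ℝ) ^ (k - j)) atTop (nhds 0) := by
  have hlog : (fun n : ℕ => Real.log n) =o[atTop] fun n : ℕ => (n : ℝ) :=
    Real.isLittleO_log_id_atTop.comp_tendsto tendsto_natCast_atTop_atTop
  refine ((isTheta_mul_pjPrevMinus (k := k) hj).1.trans_isLittleO
    hlog).tendsto_div_nhds_zero.congr' ?_
  filter_upwards [eventually_ne_atTop 0] with n hn
  exact mul_div_cancel_left₀ _ (Nat.cast_ne_zero.2 hn)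

theorem eventually_pjPrevMinus_mem_Icc (hj : 1 ≤ j) :
    ∀ᶠ n : ℕ in atTop, pjPrevMinus k j n ∈ Set.Icc 0 1 := by
  filter_upwards [eventually_ge_atTop 1, (tendsto_mul_pjPrevMinus_atTop hj).eventually_gt_atTop 0,
    (tendsto_pjPrevMinus_mul_pow hj).eventually_le_const one_pos] with n hn hpos hle
  have hn' : (1 : ℝ) ≤ n := Nat.one_le_cast.2 hn
  have hnonneg : 0 ≤ pjPrevMinus k j n :=
    (pos_of_mul_pos_left (pos_of_mul_pos_right hpos (by positivity)) (by positivity)).le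
  exact ⟨hnonneg, (le_mul_of_one_le_right hnonneg (one_le_pow₀ hn')).trans hle⟩

end Threshold

theorem statement8_general (k j : ℕ) (hj : 1 ≤ j) (hjk : j ≤ k) :
    (∃ c₁ c₂ : ℝ, 0 < c₁ ∧ c₁ ≤ c₂ ∧ ∀ᶠ n : ℕ in atTop,
      c₁ * (Real.log n) ^ (j + 2) ≤ expectStar k j n ∧
        expectStar k j n ≤ c₂ * (Real.log n) ^ (j + 2)) ∧
    ∀ ε : ℝ, 0 < ε →
      Tendsto (fun n : ℕ => birthMeasure n {t : Finset (Fin n) → ℝ |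
        |(countMjStar k j (complexAt k n t (pjPrevMinus k j n)) : ℝ) - expectStar k j n| ≤
          ε * expectStar k j n}) atTop (nhds 1) := by
  set p : ℕ → unitInterval := fun n => Set.projIcc 0 1 zero_le_one (pjPrevMinus k j n)
  have hp : ∀ᶠ n in atTop, (p n : ℝ) = pjPrevMinus k j n :=
    (eventually_pjPrevMinus_mem_Icc (k := k) hj).mono fun n hn => by
      simp [p, Set.projIcc_of_mem _ hn]
  have hE : expectStar k j =ᶠ[atTop]
      fun n => ∫ H, (mjStarCount k j H : ℝ) ∂randomHypergraph (Fin n) k (p n) :=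
    hp.mono fun n hn => by rw [expectStar, ← hn, integral_countMjStar_complexAt]
  have hQ := (tendsto_pjPrevMinus_mul_pow (k := k) hj).congr' (hp.mono fun n hn => by rw [← hn])
  have hinfty := (tendsto_mul_pjPrevMinus_atTop (k := k) hj).congr'
    (hp.mono fun n hn => by rw [← hn])
  have hlog : (fun n : ℕ => (n : ℝ) * (p n * (n : ℝ) ^ (k - j))) =Θ[atTop]
      fun n : ℕ => Real.log n :=
    EventuallyEq.trans_isTheta (hp.mono fun n hn => by simp only [hn])
      (isTheta_mul_pjPrevMinus (k := k) hj)
  constructor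
  · exact exists_bounds_of_isTheta
      (hE.trans_isTheta ((isTheta_integral_mjStarCount hj hjk hQ).trans (hlog.pow _)))
      (.of_forall fun n => integral_nonneg fun _ => Nat.cast_nonneg _)
      (.of_forall fun n => pow_nonneg (Real.log_natCast_nonneg n) _)
  · intro ε hε
    refine (tendsto_randomHypergraph_mjStarCount hj hjk hQ hinfty hε).congr' ?_
    filter_upwards [hp, hE] with n hn hEn
    rw [← hn, hEn]
    exact (birthMeasure_countMjStar_complexAt k j n (p n)
      {m | |(m : ℝ) - ∫ H, (mjStarCount k j H : ℝ) ∂randomHypergraph (Fin n) k (p n)| ≤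
        ε * ∫ H, (mjStarCount k j H : ℝ) ∂randomHypergraph (Fin n) k (p n)}).symm

/-- Lemma 4.2: at `p = p_{j-1}^-`, `E[X_*] = Θ((log n)^{j+2})` and whp
`X_* = (1+o(1))·E[X_*]`. -/
theorem statement8 (k j : ℕ) (hk : 2 ≤ k) (hj : 1 ≤ j) (hjk : j < k) :
    (∃ c₁ c₂ : ℝ, 0 < c₁ ∧ c₁ ≤ c₂ ∧ ∀ᶠ n : ℕ in atTop,
      c₁ * (Real.log n) ^ (j + 2) ≤ expectStar k j n ∧
        expectStar k j n ≤ c₂ * (Real.log n) ^ (j + 2)) ∧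
    ∀ ε : ℝ, 0 < ε →
      Tendsto (fun n : ℕ => birthMeasure n {t : Finset (Fin n) → ℝ |
        |(countMjStar k j (complexAt k n t (pjPrevMinus k j n)) : ℝ) - expectStar k j n| ≤
          ε * expectStar k j n}) atTop (nhds 1) :=
  statement8_general k j hj hjk.le

end RSC
end

section
/- Let k ≥ 2 and j ∈ {1,…,k−1}, and set p = p(n) = p_j^{(1)} := 1/(10·(j+1)·binom(k+1, j+1)·n^{k−j}). Then there exists a positive constant γ such that with high probability, for every (j+1)-subset B of [n], the complex G_p + B (obtained by adding B and all of its non-empty subsets to G_p) contains at least γ·n many j-shells that contain B, i.e. at least γ·n vertices a ∈ [n] \ B such that every (j+1)-subset of B ∪ {a} is a j-simplex of G_p + B. -/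
open MeasureTheory Filter

attribute [local instance] Classical.propDecidable

namespace RSC

variable {V : Type*}

/-- The complex `G + B` obtained by adding the set `B` and its downward-closure. -/
def plusSet (G : Set (Finset V)) (B : Finset V) : Set (Finset V) :=
  G ∪ {A | A.Nonempty ∧ A ⊆ B}

/-!
Split the vertices outside `B` into `A` and `D`, both of size linear in `n`. A vertex `a ∈ A` spans
a `j`-shell together with `B` as soon as for every `j`-subset `C` of `B` some `k`-simplex of `G_p`
consists of `a`, `C` and `k - j` vertices of `D`. The candidate simplices for different `(a, C)` are
different `(k+1)`-sets, so everything in sight is independent; there are of order `n^(k-j)`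
candidates for each `(a, C)`, so at `p` of order `n^(-(k-j))` each `a` succeeds with probability
bounded below. By Chernoff's bound, fewer than `γ n` vertices succeed with probability exponentially
small in `n`, which beats the union bound over the at most `n^(j+1)` choices of `B`.
-/

section IndependentEvents

open ProbabilityTheory

variable {Ω ι κ τ : Type*} [MeasurableSpace Ω] {μ : Measure Ω}

lemma iIndepSet_compl {E : ι → Set Ω} (hE : iIndepSet E μ) (hm : ∀ i, MeasurableSet (E i)) :
    iIndepSet (fun i => (E i)ᶜ) μ :=
  iIndepSets.iIndepSet_of_mem
    (π := fun i => {s | MeasurableSet[MeasurableSpace.generateFrom {E i}] s})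
    (fun i => MeasurableSet.compl (m := .generateFrom {E i}) (.basic _ rfl)) (fun i => (hm i).compl)
    ((iIndepSet_iff_iIndep E μ).1 hE).iIndepSets'

lemma measureReal_iInter_of_iIndepSet [Fintype ι] {E : ι → Set Ω} (hE : iIndepSet E μ) :
    μ.real (⋂ i, E i) = ∏ i, μ.real (E i) := by
  simpa [measureReal_def, ENNReal.toReal_prod] using
    congrArg ENNReal.toReal (hE.meas_biInter Finset.univ)

lemma iIndepSet_iInter_prod [Finite κ] {E : ι × κ → Set Ω} (hE : iIndepSet E μ)
    (hm : ∀ x, MeasurableSet (E x)) : iIndepSet (fun i => ⋂ j, E (i, j)) μ := by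
  have := Fintype.ofFinite κ
  refine (iIndepSet_iff_meas_biInter fun i => .iInter fun j => hm (i, j)).2 fun S => ?_
  have hrow (i : ι) : μ (⋂ j, E (i, j)) = ∏ j, μ (E (i, j)) := by
    simpa using (hE.precomp (Prod.mk_right_injective i)).meas_biInter Finset.univ
  calc μ (⋂ i ∈ S, ⋂ j, E (i, j)) = μ (⋂ x ∈ S ×ˢ Finset.univ, E x) := by
        congr 1
        ext ω
        simp only [Set.mem_iInter, Finset.mem_product, Finset.mem_univ, and_true, Prod.forall]
        exact forall_congr' fun _ => forall_comm
    _ = ∏ i ∈ S, μ (⋂ j, E (i, j)) := by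
        rw [hE.meas_biInter, Finset.prod_product]
        simp only [hrow]

lemma iIndepSet_iInter_compl_iInter [Finite κ] [Finite τ] {F : (ι × κ) × τ → Set Ω}
    (hF : iIndepSet F μ) (hm : ∀ x, MeasurableSet (F x)) :
    iIndepSet (fun i => ⋂ j, (⋂ l, F ((i, j), l))ᶜ) μ :=
  have hmeas (x : ι × κ) : MeasurableSet (⋂ l, F (x, l)) := .iInter fun l => hm (x, l)
  iIndepSet_iInter_prod (iIndepSet_compl (iIndepSet_iInter_prod hF hm) hmeas)
    fun x => (hmeas x).compl

lemma pow_le_measureReal_iInter_compl_iInter [Fintype κ] [Fintype τ] {F : (ι × κ) × τ → Set Ω}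
    (hF : iIndepSet F μ) (hm : ∀ x, MeasurableSet (F x)) {r : ℝ} (hr₀ : 0 ≤ r) (hr₁ : r ≤ 1)
    (hFr : ∀ x, μ.real (F x) ≤ r) (i : ι) :
    (1 - r ^ Fintype.card τ) ^ Fintype.card κ ≤ μ.real (⋂ j, (⋂ l, F ((i, j), l))ᶜ) := by
  have := hF.isProbabilityMeasure
  have hmeas (x : ι × κ) : MeasurableSet (⋂ l, F (x, l)) := .iInter fun l => hm (x, l)
  have hrow (x : ι × κ) : 1 - r ^ Fintype.card τ ≤ μ.real (⋂ l, F (x, l))ᶜ := by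
    rw [probReal_compl_eq_one_sub (hmeas x)]
    gcongr
    calc μ.real (⋂ l, F (x, l)) = ∏ l, μ.real (F (x, l)) :=
          measureReal_iInter_of_iIndepSet (hF.precomp (Prod.mk_right_injective x))
      _ ≤ ∏ _l : τ, r :=
          Finset.prod_le_prod (fun _ _ => measureReal_nonneg) fun l _ => hFr (x, l)
      _ = r ^ Fintype.card τ := by rw [Finset.prod_const, Finset.card_univ]
  have hindep := (iIndepSet_compl (iIndepSet_iInter_prod hF hm) hmeas).precomp
    (Prod.mk_right_injective i)
  calc (1 - r ^ Fintype.card τ) ^ Fintype.card κ = ∏ _j : κ, (1 - r ^ Fintype.card τ) := by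
        rw [Finset.prod_const, Finset.card_univ]
    _ ≤ ∏ j, μ.real (⋂ l, F ((i, j), l))ᶜ :=
        Finset.prod_le_prod (fun _ _ => sub_nonneg.2 (pow_le_one₀ hr₀ hr₁)) fun j _ => hrow (i, j)
    _ = μ.real (⋂ j, (⋂ l, F ((i, j), l))ᶜ) := (measureReal_iInter_of_iIndepSet hindep).symm

lemma mgf_indicator_one [IsProbabilityMeasure μ] {E : Set Ω} (hE : MeasurableSet E) (t : ℝ) :
    mgf (E.indicator fun _ => (1 : ℝ)) μ t = 1 + μ.real E * (Real.exp t - 1) := by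
  have hexp (ω : Ω) : Real.exp (t * E.indicator (fun _ => (1 : ℝ)) ω) =
      1 + E.indicator (fun _ => Real.exp t - 1) ω := by
    by_cases hω : ω ∈ E <;> simp [hω]
  simp only [mgf, hexp]
  rw [integral_add (integrable_const _) ((integrable_const _).indicator hE),
    integral_indicator_const _ hE]
  simp

/-- Chernoff's bound at the parameter `-1`; the factor `1 / 2` comes from `exp (-1) ≤ 1 / 2`. -/
lemma measureReal_ncard_le_le_exp [Fintype ι] {E : ι → Set Ω} (hE : iIndepSet E μ)
    (hm : ∀ i, MeasurableSet (E i)) {q : ℝ} (hq : ∀ i, q ≤ μ.real (E i)) (m : ℝ) :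
    μ.real {ω | ({i | ω ∈ E i}.ncard : ℝ) ≤ m} ≤ Real.exp (m - q / 2 * Fintype.card ι) := by
  have := hE.isProbabilityMeasure
  let X (i : ι) : Ω → ℝ := (E i).indicator fun _ => 1
  have hXm (i : ι) : Measurable (X i) := measurable_const.indicator (hm i)
  have hcount (ω : Ω) : ({i | ω ∈ E i}.ncard : ℝ) = (∑ i, X i) ω := by
    simp [X, Set.ncard_eq_toFinset_card', Set.indicator_apply]
  have hmgf (i : ι) : mgf (X i) μ (-1) ≤ Real.exp (-(q / 2)) := by
    rw [mgf_indicator_one (hm i)]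
    refine le_trans ?_ (Real.one_sub_le_exp_neg (q / 2))
    nlinarith [hq i, Real.exp_neg_one_lt_half, measureReal_nonneg (μ := μ) (s := E i)]
  have hint : Integrable (fun ω => Real.exp (-1 * (∑ i, X i) ω)) μ := by
    refine .of_bound (C := 1) (by fun_prop) (.of_forall fun ω => ?_)
    simp [← hcount]
  simp only [hcount]
  calc μ.real {ω | (∑ i, X i) ω ≤ m}
      ≤ Real.exp (-(-1) * m) * mgf (∑ i, X i) μ (-1) :=
        measure_le_le_exp_mul_mgf m (by norm_num) hint
    _ = Real.exp m * ∏ i, mgf (X i) μ (-1) := by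
        rw [hE.iIndepFun_indicator.mgf_sum hXm, neg_neg, one_mul]
    _ ≤ Real.exp m * ∏ _i : ι, Real.exp (-(q / 2)) := by
        gcongr with i
        · exact fun _ _ => mgf_nonneg
        · exact hmgf i
    _ = Real.exp (m - q / 2 * Fintype.card ι) := by
        rw [Finset.prod_const, Finset.card_univ, ← Real.exp_nat_mul, ← Real.exp_add]
        ring_nf

end IndependentEvents

section UnionBound

variable {Ω : ℕ → Type*} [∀ n, MeasurableSpace (Ω n)] {μ : ∀ n, Measure (Ω n)}
  [∀ n, IsProbabilityMeasure (μ n)]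

lemma tendsto_measure_one_of_tendsto_measure_compl {s : ∀ n, Set (Ω n)}
    (h : Tendsto (fun n => μ n (s n)ᶜ) atTop (nhds 0)) :
    Tendsto (fun n => μ n (s n)) atTop (nhds 1) := by
  have hsub : Tendsto (fun n => 1 - μ n (s n)ᶜ) atTop (nhds 1) := by
    simpa using ENNReal.Tendsto.sub tendsto_const_nhds h (.inl ENNReal.one_ne_top)
  refine tendsto_of_tendsto_of_tendsto_of_le_of_le hsub tendsto_const_nhds (fun n => ?_)
    fun n => prob_le_one
  simpa using measure_univ_le_add_compl (s n) (μ := μ n)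

lemma tendsto_measure_forall_card_eq {r : ℕ} {ε : ℝ} (hε : 0 < ε)
    {s : ∀ n, Finset (Fin n) → Set (Ω n)}
    (h : ∀ᶠ n : ℕ in atTop, ∀ B : Finset (Fin n), B.card = r →
      (μ n).real (s n B)ᶜ ≤ Real.exp (-ε * n)) :
    Tendsto (fun n => μ n {ω | ∀ B, B.card = r → ω ∈ s n B}) atTop (nhds 1) := by
  have hlim : Tendsto (fun n : ℕ => ENNReal.ofReal ((n : ℝ) ^ r * Real.exp (-ε * n)))
      atTop (nhds 0) := by
    have := tendsto_rpow_mul_exp_neg_mul_atTop_nhds_zero r ε hε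
    simp only [Real.rpow_natCast] at this
    simpa using ENNReal.tendsto_ofReal (this.comp tendsto_natCast_atTop_atTop)
  refine tendsto_measure_one_of_tendsto_measure_compl <|
    tendsto_of_tendsto_of_tendsto_of_le_of_le' tendsto_const_nhds hlim
      (.of_forall fun n => zero_le) ?_
  filter_upwards [h] with n hn
  have hcover : {ω | ∀ B, B.card = r → ω ∈ s n B}ᶜ ⊆
      ⋃ B ∈ Finset.powersetCard r Finset.univ, (s n B)ᶜ := by
    intro ω hω
    simpa using hω
  refine (measure_mono hcover).trans ?_
  rw [← ofReal_measureReal (measure_ne_top _ _)]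
  refine ENNReal.ofReal_le_ofReal ?_
  calc (μ n).real (⋃ B ∈ Finset.powersetCard r Finset.univ, (s n B)ᶜ)
      ≤ ∑ B ∈ Finset.powersetCard r Finset.univ, (μ n).real (s n B)ᶜ :=
        measureReal_biUnion_finset_le _ _
    _ ≤ n.choose r * Real.exp (-ε * n) := by
        refine (Finset.sum_le_card_nsmul _ _ (Real.exp (-ε * n)) fun B hB =>
          hn B (Finset.mem_powersetCard.1 hB).2).trans_eq ?_
        simp
    _ ≤ n ^ r * Real.exp (-ε * n) := by
        gcongr
        exact_mod_cast Nat.choose_le_pow n r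

end UnionBound

section Shells

variable [DecidableEq V]

/-- The vertices `a` outside `B` for which `B ∪ {a}` is a `j`-shell of `G + B`; they correspond to
the `j`-shells of `G + B` containing a `(j+1)`-set `B`. -/
def shellApexes (G : Set (Finset V)) (j : ℕ) (B : Finset V) : Set V :=
  {a | a ∉ B ∧ IsShell (plusSet G B) j (insert a B)}

lemma mem_shellApexes_of_forall_insert_mem {G : Set (Finset V)} {j : ℕ} {B : Finset V} {a : V}
    (hB : B.card = j + 1) (ha : a ∉ B) (h : ∀ C ∈ B.powersetCard j, insert a C ∈ G) :
    a ∈ shellApexes G j B := by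
  refine ⟨ha, by rw [Finset.card_insert_of_notMem ha, hB], fun τ hτ hcard => ?_⟩
  by_cases haτ : a ∈ τ
  · have hC : τ.erase a ∈ B.powersetCard j :=
      Finset.mem_powersetCard.2 ⟨Finset.subset_insert_iff.1 hτ, by
        rw [Finset.card_erase_of_mem haτ, hcard, Nat.add_sub_cancel]⟩
    exact .inl (Finset.insert_erase haτ ▸ h _ hC)
  · exact .inr ⟨Finset.card_pos.1 (by omega), (Finset.subset_insert_iff_of_notMem haτ).1 hτ⟩

lemma insert_union_injective {A B D : Finset V} (hAB : Disjoint A B) (hAD : Disjoint A D)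
    (hBD : Disjoint B D) (j r : ℕ) :
    Function.Injective fun x : (A × B.powersetCard j) × D.powersetCard r =>
      insert x.1.1.1 (x.1.2.1 ∪ x.2.1) := by
  rintro ⟨⟨⟨a, ha⟩, C, hC⟩, W, hW⟩ ⟨⟨⟨a', ha'⟩, C', hC'⟩, W', hW'⟩ h
  simp only [Finset.mem_powersetCard] at hC hW hC' hW'
  have hmem (x : V) : x = a ∨ x ∈ C ∨ x ∈ W ↔ x = a' ∨ x ∈ C' ∨ x ∈ W' := by
    simpa using Finset.ext_iff.1 h x
  rw [Finset.disjoint_left] at hAB hAD hBD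
  have ha_eq : a = a' := by grind
  have hC_eq : C = C' := by grind
  have hW_eq : W = W' := by grind
  subst ha_eq hC_eq hW_eq
  rfl

end Shells

section BirthTimes

open ProbabilityTheory

instance : IsProbabilityMeasure (volume.restrict (Set.Icc (0 : ℝ) 1)) := ⟨by simp⟩

instance (n : ℕ) : IsProbabilityMeasure (birthMeasure n) := by
  unfold birthMeasure
  infer_instance

variable {n : ℕ}

lemma birthMeasure_real_lt_le_exp (p : ℝ) (K : Finset (Fin n)) :
    (birthMeasure n).real {t | p < t K} ≤ Real.exp (-p) := by
  have heval : (birthMeasure n).real {t | p < t K} =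
      (volume.restrict (Set.Icc (0 : ℝ) 1)).real (Set.Ioi p) :=
    (measurePreserving_eval (fun _ => volume.restrict (Set.Icc (0 : ℝ) 1)) K).measureReal_preimage
      measurableSet_Ioi.nullMeasurableSet
  rw [heval, measureReal_restrict_apply measurableSet_Ioi]
  calc volume.real (Set.Ioi p ∩ Set.Icc 0 1) ≤ volume.real (Set.Ioc p 1) :=
        measureReal_mono (fun x hx => ⟨hx.1, hx.2.2⟩) (by simp)
    _ ≤ Real.exp (-p) := by
        rw [Real.volume_real_Ioc]
        exact max_le (Real.one_sub_le_exp_neg p) (Real.exp_pos _).le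

lemma measurableSet_birth_lt (p : ℝ) (K : Finset (Fin n)) :
    MeasurableSet {t : Finset (Fin n) → ℝ | p < t K} :=
  measurableSet_lt measurable_const (measurable_pi_apply K)

lemma iIndepSet_birth_lt (n : ℕ) (p : ℝ) :
    iIndepSet (fun K : Finset (Fin n) => {t | p < t K}) (birthMeasure n) := by
  have hindep : iIndepFun (fun (K : Finset (Fin n)) (t : Finset (Fin n) → ℝ) => t K)
      (birthMeasure n) :=
    iIndepFun_pi (X := fun _ x => x) fun _ => aemeasurable_id
  exact iIndepSets.iIndepSet_of_mem
    (π := fun K => {s | MeasurableSet[MeasurableSpace.comap (fun t => t K) inferInstance] s})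
    (fun K => ⟨Set.Ioi p, measurableSet_Ioi, rfl⟩) (measurableSet_birth_lt p)
    ((iIndepFun_iff_iIndep _ _ _).1 hindep).iIndepSets'

/-- The event that for every `j`-subset `C` of `B`, some `k`-simplex born by time `p` is made up of
`a`, `C` and `k - j` vertices of `D`. Restricting to `D` is what makes these events independent
for different `a`. -/
def apexEvent (k j : ℕ) (p : ℝ) (B D : Finset (Fin n)) (a : Fin n) : Set (Finset (Fin n) → ℝ) :=
  {t | ∀ C ∈ B.powersetCard j, ∃ W ∈ D.powersetCard (k - j), t (insert a (C ∪ W)) ≤ p}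

lemma apexEvent_eq_iInter (k j : ℕ) (p : ℝ) (B D : Finset (Fin n)) (a : Fin n) :
    apexEvent k j p B D a = ⋂ C : B.powersetCard j,
      (⋂ W : D.powersetCard (k - j), {t | p < t (insert a (C.1 ∪ W.1))})ᶜ := by
  ext t
  simp [apexEvent, -Finset.mem_powersetCard]

lemma measurableSet_apexEvent (k j : ℕ) (p : ℝ) (B D : Finset (Fin n)) (a : Fin n) :
    MeasurableSet (apexEvent k j p B D a) := by
  rw [apexEvent_eq_iInter]
  exact .iInter fun _ => (MeasurableSet.iInter fun _ => measurableSet_birth_lt p _).compl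

lemma mem_shellApexes_of_mem_apexEvent {k j : ℕ} {p : ℝ} {B D : Finset (Fin n)} {a : Fin n}
    {t : Finset (Fin n) → ℝ} (hjk : j ≤ k) (hB : B.card = j + 1) (hBD : Disjoint B D)
    (haB : a ∉ B) (haD : a ∉ D) (ht : t ∈ apexEvent k j p B D a) :
    a ∈ shellApexes (complexAt k n t p) j B := by
  refine mem_shellApexes_of_forall_insert_mem hB haB fun C hC => ?_
  obtain ⟨W, hW, htW⟩ := ht C hC
  rw [Finset.mem_powersetCard] at hC hW
  have hcard : (insert a (C ∪ W)).card = k + 1 := by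
    rw [Finset.card_insert_of_notMem (by grind),
      Finset.card_union_of_disjoint (hBD.mono hC.1 hW.1), hC.2, hW.2, Nat.add_sub_cancel' hjk]
  exact .inr ⟨Finset.insert_nonempty _ _, _, hcard, htW,
    Finset.insert_subset_insert _ Finset.subset_union_left⟩

variable {k j : ℕ} {p : ℝ} {A B D : Finset (Fin n)}

lemma iIndepSet_birth_insert_union_lt (k j : ℕ) (p : ℝ) (hAB : Disjoint A B) (hAD : Disjoint A D)
    (hBD : Disjoint B D) :
    iIndepSet (fun x : (A × B.powersetCard j) × D.powersetCard (k - j) =>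
      {t | p < t (insert x.1.1.1 (x.1.2.1 ∪ x.2.1))}) (birthMeasure n) :=
  (iIndepSet_birth_lt n p).precomp (insert_union_injective hAB hAD hBD j (k - j))

lemma iIndepSet_apexEvent (k j : ℕ) (p : ℝ) (hAB : Disjoint A B) (hAD : Disjoint A D)
    (hBD : Disjoint B D) :
    iIndepSet (fun a : A => apexEvent k j p B D a) (birthMeasure n) := by
  have hindep := iIndepSet_iInter_compl_iInter
    (iIndepSet_birth_insert_union_lt k j p hAB hAD hBD) fun _ => measurableSet_birth_lt p _
  simpa only [apexEvent_eq_iInter] using hindep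

lemma pow_le_birthMeasure_real_apexEvent (hp : 0 ≤ p) (hB : B.card = j + 1) (hAB : Disjoint A B)
    (hAD : Disjoint A D) (hBD : Disjoint B D) (a : A) :
    (1 - Real.exp (-(p * D.card.choose (k - j)))) ^ (j + 1) ≤
      (birthMeasure n).real (apexEvent k j p B D a) := by
  have hpow := pow_le_measureReal_iInter_compl_iInter
    (iIndepSet_birth_insert_union_lt k j p hAB hAD hBD)
    (fun _ => measurableSet_birth_lt p _) (Real.exp_pos _).le
    (Real.exp_le_one_iff.2 (neg_nonpos.2 hp)) (fun _ => birthMeasure_real_lt_le_exp p _) a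
  have hexp : Real.exp (-(p * D.card.choose (k - j))) = Real.exp (-p) ^ D.card.choose (k - j) := by
    rw [← Real.exp_nat_mul]
    ring_nf
  rw [Fintype.card_coe, Fintype.card_coe, Finset.card_powersetCard, Finset.card_powersetCard, hB,
    Nat.choose_succ_self_right] at hpow
  rw [hexp, apexEvent_eq_iInter]
  exact hpow

lemma birthMeasure_real_ncard_shellApexes_le (hjk : j ≤ k) (hp : 0 ≤ p) (hB : B.card = j + 1)
    (hAB : Disjoint A B) (hAD : Disjoint A D) (hBD : Disjoint B D) (m : ℝ) :
    (birthMeasure n).real {t | ((shellApexes (complexAt k n t p) j B).ncard : ℝ) ≤ m} ≤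
      Real.exp (m - (1 - Real.exp (-(p * D.card.choose (k - j)))) ^ (j + 1) / 2 * A.card) := by
  have hnotMem {S : Finset (Fin n)} (hAS : Disjoint A S) (a : A) : (a : Fin n) ∉ S :=
    Finset.disjoint_left.1 hAS a.2
  have hcount (t : Finset (Fin n) → ℝ) : {a : A | t ∈ apexEvent k j p B D a}.ncard ≤
      (shellApexes (complexAt k n t p) j B).ncard := by
    rw [← Set.ncard_image_of_injective _ Subtype.val_injective]
    refine Set.ncard_le_ncard ?_
    rintro _ ⟨a, ha, rfl⟩
    exact mem_shellApexes_of_mem_apexEvent hjk hB hBD (hnotMem hAB a) (hnotMem hAD a) ha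
  have hchernoff := measureReal_ncard_le_le_exp (iIndepSet_apexEvent k j p hAB hAD hBD)
    (fun a => measurableSet_apexEvent k j p B D a)
    (fun a => pow_le_birthMeasure_real_apexEvent hp hB hAB hAD hBD a) m
  rw [Fintype.card_coe] at hchernoff
  refine (measureReal_mono fun t ht => ?_).trans hchernoff
  exact (Nat.cast_le.2 (hcount t)).trans (Set.mem_ofPred.1 ht)

end BirthTimes

section LinearlyManyShells

variable {k j n : ℕ} {c p : ℝ}

/-- A lower bound, uniform in `n`, for the probability of an `apexEvent` when
`p ≥ c / n ^ (k - j)` and `|D| + 1 - (k - j) ≥ n / 4`. The exponent is `c / n ^ (k - j)` times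
`(n / 4) ^ (k - j) / (k - j)!`, which bounds `|D|.choose (k - j)` from below. -/
noncomputable def apexProb (k j : ℕ) (c : ℝ) : ℝ :=
  (1 - Real.exp (-(c / (4 ^ (k - j) * (k - j).factorial)))) ^ (j + 1)

lemma apexProb_pos (k j : ℕ) (hc : 0 < c) : 0 < apexProb k j c := by
  refine pow_pos (sub_pos.2 (Real.exp_lt_one_iff.2 (neg_lt_zero.2 ?_))) _
  positivity

lemma pow_div_le_choose {r d : ℕ} (h : n ≤ 4 * (d + 1 - r)) :
    (n : ℝ) ^ r / (4 ^ r * r.factorial) ≤ d.choose r := by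
  have hn : (n : ℝ) / 4 ≤ (d + 1 - r : ℕ) := by
    rw [div_le_iff₀' (by norm_num)]
    exact_mod_cast h
  calc (n : ℝ) ^ r / (4 ^ r * r.factorial) = (n / 4) ^ r / r.factorial := by rw [div_pow, div_div]
    _ ≤ ((d + 1 - r : ℕ) : ℝ) ^ r / r.factorial := by gcongr
    _ ≤ d.choose r := Nat.pow_le_choose r d

lemma apexProb_le (hc : 0 < c) (hn : 0 < n) (hp : c / n ^ (k - j) ≤ p) {d : ℕ}
    (hd : n ≤ 4 * (d + 1 - (k - j))) :
    apexProb k j c ≤ (1 - Real.exp (-(p * d.choose (k - j)))) ^ (j + 1) := by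
  have hmean : c / (4 ^ (k - j) * (k - j).factorial) ≤ p * d.choose (k - j) := by
    calc c / (4 ^ (k - j) * (k - j).factorial)
        = c / n ^ (k - j) * (n ^ (k - j) / (4 ^ (k - j) * (k - j).factorial)) := by field_simp
      _ ≤ p * d.choose (k - j) := by
          gcongr
          · exact le_trans (by positivity) hp
          · exact pow_div_le_choose hd
  have hnonneg : 0 ≤ 1 - Real.exp (-(c / (4 ^ (k - j) * (k - j).factorial))) :=
    sub_nonneg.2 (Real.exp_le_one_iff.2 (neg_nonpos.2 (by positivity)))
  unfold apexProb
  gcongr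

lemma exists_disjoint_linear_card {B : Finset (Fin n)} (hn : 100 * (k + 1) ≤ n)
    (hB : B.card ≤ k + 1) :
    ∃ A D : Finset (Fin n), Disjoint A B ∧ Disjoint A D ∧ Disjoint B D ∧
      n ≤ 4 * A.card ∧ n ≤ 4 * (D.card + 1 - k) := by
  have hcompl : Bᶜ.card = n - B.card := by rw [Finset.card_compl, Fintype.card_fin]
  obtain ⟨A, hA, hAcard⟩ := Finset.exists_subset_card_eq (s := Bᶜ) (n := n / 3) (by omega)
  have hDcard : (Bᶜ \ A).card = n - B.card - n / 3 := by
    rw [Finset.card_sdiff_of_subset hA, hcompl, hAcard]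
  exact ⟨A, Bᶜ \ A, Finset.subset_compl_iff_disjoint_right.1 hA, Finset.disjoint_sdiff,
    disjoint_compl_right.mono_right Finset.sdiff_subset, by omega, by omega⟩

/-- The `16` is `2 * 2 * 4`: Chernoff's bound has exponent `m - q / 2 * |A|` with `|A| ≥ n / 4`, and
half of that is given up to `m`. -/
lemma birthMeasure_real_few_shellApexes_le (hjk : j ≤ k) (hc : 0 < c) (hn : 100 * (k + 1) ≤ n)
    (hp : c / n ^ (k - j) ≤ p) {B : Finset (Fin n)} (hB : B.card = j + 1) :
    (birthMeasure n).real
        {t | ((shellApexes (complexAt k n t p) j B).ncard : ℝ) ≤ apexProb k j c / 16 * n} ≤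
      Real.exp (-(apexProb k j c / 16) * n) := by
  have hBk : B.card ≤ k + 1 := by omega
  obtain ⟨A, D, hAB, hAD, hBD, hA, hD⟩ := exists_disjoint_linear_card hn hBk
  have hp0 : 0 ≤ p := le_trans (by positivity) hp
  have hq0 := apexProb_pos k j hc
  have hq := apexProb_le hc (by omega) hp (d := D.card) (by omega)
  have hA' : (n : ℝ) ≤ 4 * A.card := by exact_mod_cast hA
  refine (birthMeasure_real_ncard_shellApexes_le hjk hp0 hB hAB hAD hBD _).trans ?_
  gcongr
  have hexpect : apexProb k j c / 8 * n ≤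
      (1 - Real.exp (-(p * D.card.choose (k - j)))) ^ (j + 1) / 2 * A.card := by
    calc apexProb k j c / 8 * n ≤ apexProb k j c / 8 * (4 * A.card) := by gcongr
      _ = apexProb k j c / 2 * A.card := by ring
      _ ≤ _ := by gcongr
  linarith

theorem statement9_general (hjk : j ≤ k) (hc : 0 < c) {p : ℕ → ℝ}
    (hp : ∀ᶠ n : ℕ in atTop, c / (n : ℝ) ^ (k - j) ≤ p n) :
    ∃ γ : ℝ, 0 < γ ∧
      Tendsto (fun n : ℕ => birthMeasure n {t | ∀ B : Finset (Fin n), B.card = j + 1 →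
        γ * n ≤ ((shellApexes (complexAt k n t (p n)) j B).ncard : ℝ)}) atTop (nhds 1) := by
  have hγ : 0 < apexProb k j c / 16 := div_pos (apexProb_pos k j hc) (by norm_num)
  refine ⟨apexProb k j c / 16, hγ, ?_⟩
  refine tendsto_measure_forall_card_eq (μ := birthMeasure) (s := fun n B =>
    {t | apexProb k j c / 16 * n ≤ ((shellApexes (complexAt k n t (p n)) j B).ncard : ℝ)}) hγ ?_
  filter_upwards [eventually_ge_atTop (100 * (k + 1)), hp] with n hn hpn B hB
  refine le_trans (measureReal_mono fun t ht => ?_)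
    (birthMeasure_real_few_shellApexes_le hjk hc hn hpn hB)
  simp only [Set.mem_compl_iff, Set.mem_ofPred_eq, not_le] at ht ⊢
  exact ht.le

end LinearlyManyShells

/-- Lemma 4.3: at `p = p_j^{(1)}`, there is a constant `γ > 0` such that whp every
`(j+1)`-set `B` lies in at least `γ·n` many `j`-shells of `G_p + B`. -/
theorem statement9 (k j : ℕ) (hk : 2 ≤ k) (hj : 1 ≤ j) (hjk : j < k) :
    ∃ γ : ℝ, 0 < γ ∧
      Tendsto (fun n : ℕ => birthMeasure n {t : Finset (Fin n) → ℝ |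
        ∀ B : Finset (Fin n), B.card = j + 1 →
          γ * n ≤ (({a : Fin n | a ∉ B ∧
            IsShell (plusSet (complexAt k n t (pjOne k j n)) B) j (insert a B)}).ncard : ℝ)})
        atTop (nhds 1) := by
  have hchoose : 0 < (k + 1).choose (j + 1) := Nat.choose_pos (by omega)
  exact statement9_general hjk.le
    (c := 1 / (10 * ((j : ℝ) + 1) * (k + 1).choose (j + 1))) (by positivity)
    (.of_forall fun n => by rw [pjOne, div_div])

end RSC
end
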